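/- arXiv:1709.01685 — 2 statements merged into one kernel-verified Lean document; each statement's English description precedes it below -/
import Mathlib

section
/- Let x ∈ g₁ be regular with minimal polynomial m_x. Then, as an equality of rational numbers, |{g ∈ G₁ : gx = xg}| = 2^ν · q^n · ∏_{d,e ≥ 1} (1 + q^{−d})^{S_{d,e}(m_x)} · (1 − q^{−d})^{T_{d,e}(m_x)}, where ν = 1 if N is even and det x = 0, and ν = 0 otherwise. -/
/-!
Write `m` for the minimal polynomial of `x` and `q` for the order of `k`.

*The commutant.* Regularity forces `deg m = N` (`natDegree_minpoly_eq`): for a vector with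
annihilator `(m)`, divided differences give an `N`-dimensional space of matrices commuting with `x`,
and a bound on those fixed by the adjoint involution shows that, if `deg m < N`, the space of skew
ones is too large. So every matrix commuting with `x` is a polynomial in `x`
(`exists_aeval_of_commute`), the commutant is `R = k[t]/(m)`, and the adjoint with respect to `J`
becomes the involution `θ : t ↦ -t` of `R`.

*Reduction to unit groups.* The centralizer is `{f ∈ R | f * θ f = 1, det f(x) = 1}`. It equals
`U = {f | f * θ f = 1, t ∣ f - 1}`, except when `N` is even and `t ∣ m`, where it is the
disjoint union of `U` and `-U` (`card_centralizer`). By a form of Hilbert 90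
(`exists_unit_of_norm_one`), `U` is the image of `h ↦ h / θ h` on `Rˣ`. The kernel is the unit group
of the fixed ring `k[s]/(g)`, where `s = t²` and `g(t²)` is `m` or `t * m`, whichever is even. Thus
`|U| = |(k[t]/(m))ˣ| / |(k[s]/(g))ˣ|` (`exists_involution_card`).

*Counting.* Both unit groups are counted by `card_units_adjoinRoot`, and the powers of `q` leave
`q ^ ⌊N/2⌋`. The remaining Euler factors are grouped by the irreducible divisors `p` of `g`, with
`d = deg p` (`prod_irrDivisors_expand`): `p = t` contributes `1`; if `p(t²)` is irreducible, `p`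
contributes `(1 - q ^ (-2d)) / (1 - q ^ (-d)) = 1 + q ^ (-d)`; otherwise `p(t²) = τ * τ̃` with `τ ≠ τ̃`
and `p` contributes `1 - q ^ (-d)`. Sorting by degree and by multiplicity in `m` gives the exponents
`S_{d,e}` and `T_{d,e}` (`prod_localFactor`).
-/

open Matrix Polynomial
open scoped Classical

/-- The space of matrices over `K` commuting with `x` and anti-symmetric with respect
to `J`. -/
def antiCent (K : Type*) [CommRing K] (N : ℕ) (J x : Matrix (Fin N) (Fin N) K) :
    Submodule K (Matrix (Fin N) (Fin N) K) where
  carrier := {y | x * y = y * x ∧ yᵀ * J + J * y = 0}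
  add_mem' := by
    rintro a b ⟨ha1, ha2⟩ ⟨hb1, hb2⟩
    refine ⟨by rw [mul_add, add_mul, ha1, hb1], ?_⟩
    show (a + b)ᵀ * J + J * (a + b) = 0
    rw [transpose_add, add_mul, mul_add,
      show aᵀ * J + bᵀ * J + (J * a + J * b) = aᵀ * J + J * a + (bᵀ * J + J * b) by abel,
      ha2, hb2, add_zero]
  zero_mem' := by
    constructor
    · rw [mul_zero, zero_mul]
    · rw [transpose_zero, zero_mul, mul_zero, add_zero]
  smul_mem' := by
    rintro c a ⟨ha1, ha2⟩
    refine ⟨by rw [mul_smul_comm, smul_mul_assoc, ha1], ?_⟩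
    show (c • a)ᵀ * J + J * (c • a) = 0
    rw [transpose_smul, smul_mul_assoc, mul_smul_comm, ← smul_add, ha2, smul_zero]

/-- `S_{d,e}(f)`: the number of distinct monic irreducible even polynomials of degree
`2d` dividing `f` with multiplicity exactly `e`. -/
noncomputable def Scount (k : Type*) [Field k] (f : Polynomial k) (d e : ℕ) : ℕ :=
  Nat.card {π : Polynomial k // π.Monic ∧ Irreducible π ∧ π.natDegree = 2 * d ∧
    π.comp (-X) = π ∧ π ^ e ∣ f ∧ ¬ π ^ (e + 1) ∣ f}

/-- `T_{d,e}(f)`: the number of unordered pairs `{τ, τ̃}` where `τ` is monic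
irreducible of degree `d`, `τ̃ = (-1)^d τ(-t)` is the monic associate of `τ(-t)`,
`τ ≠ τ̃`, and `τ` divides `f` with multiplicity exactly `e`. -/
noncomputable def Tcount (k : Type*) [Field k] (f : Polynomial k) (d e : ℕ) : ℕ :=
  Nat.card {P : Set (Polynomial k) // ∃ τ : Polynomial k, τ.Monic ∧ Irreducible τ ∧
    τ.natDegree = d ∧ (-1 : Polynomial k) ^ d * τ.comp (-X) ≠ τ ∧
    τ ^ e ∣ f ∧ ¬ τ ^ (e + 1) ∣ f ∧ P = {τ, (-1 : Polynomial k) ^ d * τ.comp (-X)}}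

/-! ### Base change and cyclic vectors -/

/-- Passing to an extension field can only increase the dimension of `antiCent`, since vectors
independent over `K` stay independent over `L`. Hence regularity, a condition over the algebraic
closure, bounds the dimension over `k` itself. -/
theorem finrank_antiCent_le {K L : Type*} [Field K] [Field L] [Algebra K L] (N : ℕ)
    (J x : Matrix (Fin N) (Fin N) K) :
    Module.finrank K (antiCent K N J x) ≤
      Module.finrank L (antiCent L N (J.map (algebraMap K L)) (x.map (algebraMap K L))) := by
  let b := Module.finBasis K (antiCent K N J x)
  let φ : Matrix (Fin N) (Fin N) K →+* Matrix (Fin N) (Fin N) L := (algebraMap K L).mapMatrix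
  have hφ : ∀ y, φ y = y.map (algebraMap K L) := fun y => rfl
  have hφt : ∀ y, φ yᵀ = (φ y)ᵀ := fun y => rfl
  have hmem : ∀ y ∈ antiCent K N J x,
      φ y ∈ antiCent L N (J.map (algebraMap K L)) (x.map (algebraMap K L)) := by
    rintro y ⟨h1, h2⟩
    refine ⟨?_, ?_⟩
    · rw [← hφ, ← map_mul, h1, map_mul]
    · rw [← hφ, ← hφt, ← map_mul, ← map_mul, ← map_add, h2, map_zero]
  let c : Fin (Module.finrank K (antiCent K N J x)) →
      antiCent L N (J.map (algebraMap K L)) (x.map (algebraMap K L)) :=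
    fun i => ⟨φ (b i : Matrix (Fin N) (Fin N) K), hmem _ (b i).2⟩
  have hb : LinearIndependent K fun i => (b i : Matrix (Fin N) (Fin N) K) :=
    b.linearIndependent.map' (antiCent K N J x).subtype (Submodule.ker_subtype _)
  -- matrices are viewed as vectors indexed by pairs
  have hb' : LinearIndependent K fun i => fun p : Fin N × Fin N =>
      (b i : Matrix (Fin N) (Fin N) K) p.1 p.2 :=
    hb.map' (LinearEquiv.curry K K (Fin N) (Fin N)).symm.toLinearMap
      (LinearEquiv.ker _)
  have hc' := (linearIndependent_algebraMap_comp_iff (S := L)).2 hb'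
  have hc : LinearIndependent L c := by
    have h3 := hc'.map' (LinearEquiv.curry L L (Fin N) (Fin N)).toLinearMap (LinearEquiv.ker _)
    exact LinearIndependent.of_comp (Submodule.subtype _) h3
  simpa using hc.fintype_card_le_finrank

/-- There is a vector `v` whose annihilator in `k[t]` is generated by the minimal polynomial of `x`.
Vectors are `N × 1` matrices, so that products with matrices and row vectors are all matrix
products. -/
theorem exists_cyclic {k : Type*} [Field k] {N : ℕ} (x : Matrix (Fin N) (Fin N) k) :
    ∃ v : Matrix (Fin N) Unit k, ∀ p : k[X], aeval x p * v = 0 → minpoly k x ∣ p := by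
  let f := Matrix.toLin' x
  obtain ⟨u, hu⟩ := Module.exists_ker_toSpanSingleton_eq_annihilator k[X] (Module.AEval' f)
  obtain ⟨u, rfl⟩ := (Module.AEval'.of _).surjective u
  refine ⟨Matrix.replicateCol Unit u, fun p hp => ?_⟩
  rw [← span_minpoly_eq_annihilator k] at hu
  rw [← Matrix.minpoly_toLin', ← Ideal.mem_span_singleton, ← hu, LinearMap.mem_ker,
    LinearMap.toSpanSingleton_apply, Module.AEval'.of, ← Module.AEval.of_aeval_smul]
  have h1 : aeval f p = Matrix.toLin' (aeval x p) := by
    exact Polynomial.aeval_algHom_apply (Matrix.toLinAlgEquiv' : Matrix (Fin N) (Fin N) k ≃ₐ[k] _).toAlgHom x p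
  have h2 : (aeval x p) *ᵥ u = 0 := by
    rw [← Matrix.replicateCol_mulVec] at hp
    ext i
    exact congrFun (congrFun hp i) ()
  rw [h1, Module.End.smul_def, Matrix.toLin'_apply, h2, map_zero]

/-! ### Divided differences -/

/-- The divided difference `(p(x) ⊗ 1 - 1 ⊗ p(x)) / (x ⊗ 1 - 1 ⊗ x)` applied to the rank one matrix
`v * l`, that is `∑ₛ pₛ ∑_{i < s} x ^ (s - 1 - i) * (v * l) * x ^ i`, as a linear function of the
row vector `l`. The truncated subtraction is harmless, as `i < s`. -/
noncomputable def divDiff {k : Type*} [Field k] {N : ℕ} (x : Matrix (Fin N) (Fin N) k) (p : k[X])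
    (v : Matrix (Fin N) Unit k) :
    Matrix Unit (Fin N) k →ₗ[k] Matrix (Fin N) (Fin N) k where
  toFun l := ∑ s ∈ Finset.range (p.natDegree + 1),
    p.coeff s • ∑ i ∈ Finset.range s, x ^ (s - 1 - i) * (v * l) * x ^ i
  map_add' a b := by
    simp only [mul_add, add_mul, Finset.sum_add_distrib, smul_add, Matrix.mul_add]
  map_smul' c a := by
    simp only [Matrix.mul_smul, ← Finset.smul_sum, RingHom.id_apply,
      mul_smul_comm, smul_mul_assoc]
    rw [Finset.smul_sum]
    exact Finset.sum_congr rfl fun s _ => smul_comm _ _ _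

theorem divDiff_apply {k : Type*} [Field k] {N : ℕ} (x : Matrix (Fin N) (Fin N) k) (p : k[X])
    (v : Matrix (Fin N) Unit k) (l : Matrix Unit (Fin N) k) :
    divDiff x p v l = ∑ s ∈ Finset.range (p.natDegree + 1),
      p.coeff s • ∑ i ∈ Finset.range s, x ^ (s - 1 - i) * (v * l) * x ^ i := rfl

/-- If `p(x) = 0` then the divided difference commutes with `x`: the sum telescopes to
`p(x) * (v * l) - (v * l) * p(x)`. -/
theorem divDiff_comm {k : Type*} [Field k] {N : ℕ} (x : Matrix (Fin N) (Fin N) k) (p : k[X])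
    (v : Matrix (Fin N) Unit k) (l : Matrix Unit (Fin N) k) (hp : aeval x p = 0) :
    x * divDiff x p v l = divDiff x p v l * x := by
  rw [← sub_eq_zero]
  have key : ∀ s, x * (∑ i ∈ Finset.range s, x ^ (s - 1 - i) * (v * l) * x ^ i) -
      (∑ i ∈ Finset.range s, x ^ (s - 1 - i) * (v * l) * x ^ i) * x =
      x ^ s * (v * l) - (v * l) * x ^ s := by
    intro s
    have h := Finset.sum_range_sub' (fun i => x ^ (s - i) * (v * l) * x ^ i) s
    simp only [Nat.sub_zero, pow_zero, mul_one, Nat.sub_self, one_mul] at h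
    rw [← h, Finset.mul_sum, Finset.sum_mul, ← Finset.sum_sub_distrib]
    refine Finset.sum_congr rfl fun i hi => ?_
    have hi' := Finset.mem_range.1 hi
    rw [show s - i = s - 1 - i + 1 by omega, show s - (i + 1) = s - 1 - i by omega,
      pow_succ' x (s - 1 - i), pow_succ x i]
    simp only [mul_assoc]
  rw [divDiff_apply, Finset.mul_sum, Finset.sum_mul, ← Finset.sum_sub_distrib]
  simp only [mul_smul_comm, smul_mul_assoc, ← smul_sub, key]
  rw [aeval_eq_sum_range] at hp
  simp only [smul_sub, Finset.sum_sub_distrib]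
  have e1 : ∑ s ∈ Finset.range (p.natDegree + 1), p.coeff s • (x ^ s * (v * l)) =
      (∑ s ∈ Finset.range (p.natDegree + 1), p.coeff s • x ^ s) * (v * l) := by
    rw [Finset.sum_mul]; simp only [smul_mul_assoc]
  have e2 : ∑ s ∈ Finset.range (p.natDegree + 1), p.coeff s • ((v * l) * x ^ s) =
      (v * l) * (∑ s ∈ Finset.range (p.natDegree + 1), p.coeff s • x ^ s) := by
    rw [Finset.mul_sum]; simp only [mul_smul_comm]
  rw [e1, e2, hp, zero_mul, mul_zero, sub_zero]

theorem divDiff_mul {k : Type*} [Field k] {N : ℕ} (x : Matrix (Fin N) (Fin N) k) (p : k[X])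
    (v : Matrix (Fin N) Unit k) (l : Matrix Unit (Fin N) k) :
    divDiff x p v (l * x) = divDiff x p v l * x := by
  simp only [divDiff_apply, Finset.sum_mul, smul_mul_assoc]
  refine Finset.sum_congr rfl fun s _ => ?_
  congr 1
  refine Finset.sum_congr rfl fun i _ => ?_
  rw [← Matrix.mul_assoc v l x, mul_assoc, mul_assoc, mul_assoc, mul_assoc, ← pow_succ,
    ← pow_succ']

/-- For monic `p` of degree `d`, a row `a` which vanishes on `v, …, x ^ (d - 2) * v` and is `1` on
`x ^ (d - 1) * v` recovers `l` from the divided difference. Thus `l ↦ divDiff x p v l` is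
injective whenever such a row exists. -/
theorem divDiff_recover {k : Type*} [Field k] {N : ℕ} (x : Matrix (Fin N) (Fin N) k) (p : k[X])
    (hp : p.Monic) (hp0 : 0 < p.natDegree)
    (v : Matrix (Fin N) Unit k) (a : Matrix Unit (Fin N) k)
    (ha : ∀ j < p.natDegree, a * (x ^ j * v) = if j = p.natDegree - 1 then 1 else 0)
    (l : Matrix Unit (Fin N) k) : a * divDiff x p v l = l := by
  have hterm : ∀ s < p.natDegree + 1, ∀ i < s, a * (x ^ (s - 1 - i) * (v * l) * x ^ i) =
      if s = p.natDegree ∧ i = 0 then l else 0 := by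
    intro s hs i hi
    have : a * (x ^ (s - 1 - i) * (v * l) * x ^ i) = (a * (x ^ (s - 1 - i) * v)) * (l * x ^ i) := by
      simp only [Matrix.mul_assoc]
    rw [this, ha _ (by omega)]
    by_cases h : s = p.natDegree ∧ i = 0
    · rw [if_pos (by omega), if_pos h, h.2, pow_zero, Matrix.one_mul, Matrix.mul_one]
    · rw [if_neg (by omega), if_neg h, Matrix.zero_mul]
  rw [divDiff_apply, Matrix.mul_sum, Finset.sum_eq_single p.natDegree]
  · rw [hp.coeff_natDegree, one_smul, Matrix.mul_sum, Finset.sum_eq_single 0]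
    · rw [hterm _ (by omega) _ hp0, if_pos ⟨rfl, rfl⟩]
    · intro i hi h
      rw [hterm _ (by omega) _ (Finset.mem_range.1 hi), if_neg (by tauto)]
    · intro h
      exact absurd (Finset.mem_range.2 hp0) h
  · intro s hs h
    rw [Matrix.mul_smul, Matrix.mul_sum, Finset.sum_eq_zero, smul_zero]
    intro i hi
    rw [hterm _ (Finset.mem_range.1 hs) _ (Finset.mem_range.1 hi), if_neg (by tauto)]
  · intro h
    exact absurd (Finset.mem_range.2 (Nat.lt_succ_self _)) h

/-- On rows killed by `x` the divided difference is the rank one matrix `w * l` with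
`w = ∑_{s > 0} pₛ x ^ (s - 1) * v`, since only the terms with `i = 0` survive. -/
theorem divDiff_of_mul_eq_zero {k : Type*} [Field k] {N : ℕ} (x : Matrix (Fin N) (Fin N) k)
    (p : k[X]) (v : Matrix (Fin N) Unit k) :
    ∃ w : Matrix (Fin N) Unit k, ∀ l : Matrix Unit (Fin N) k, l * x = 0 →
      divDiff x p v l = w * l := by
  refine ⟨∑ s ∈ Finset.range (p.natDegree + 1), if 0 < s then p.coeff s • (x ^ (s - 1) * v) else 0,
    fun l hl => ?_⟩
  rw [divDiff_apply, Matrix.sum_mul]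
  refine Finset.sum_congr rfl fun s _ => ?_
  split_ifs with hs
  · rw [Finset.sum_eq_single 0, pow_zero, mul_one, Nat.sub_zero, Matrix.smul_mul, Matrix.mul_assoc]
    · intro i _ hi
      obtain ⟨j, rfl⟩ := Nat.exists_eq_succ_of_ne_zero hi
      rw [pow_succ', ← mul_assoc, mul_assoc _ (v * l) x, Matrix.mul_assoc v l x, hl,
        Matrix.mul_zero, mul_zero, zero_mul]
    · intro h
      exact absurd (Finset.mem_range.2 hs) h
  · obtain rfl : s = 0 := by omega
    simp

/-- The columns of the divided difference lie in the span of `v, x * v, …, x ^ (d - 1) * v`, where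
`d` is the degree of `p`. -/
theorem divDiff_mul_col {k : Type*} [Field k] {N : ℕ} (x : Matrix (Fin N) (Fin N) k)
    (p : k[X]) (v u : Matrix (Fin N) Unit k) (l : Matrix Unit (Fin N) k)
    (W : Submodule k (Matrix (Fin N) Unit k)) (hW : ∀ j < p.natDegree, x ^ j * v ∈ W) :
    divDiff x p v l * u ∈ W := by
  rw [divDiff_apply, Matrix.sum_mul]
  refine W.sum_mem fun s hs => ?_
  rw [Matrix.smul_mul, Matrix.sum_mul]
  refine W.smul_mem _ (W.sum_mem fun i hi => ?_)
  have : x ^ (s - 1 - i) * (v * l) * x ^ i * u = (x ^ (s - 1 - i) * v) * (l * x ^ i * u) := by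
    simp only [Matrix.mul_assoc]
  have h2 : ∀ (y : Matrix (Fin N) Unit k) (c : Matrix Unit Unit k), y * c = c () () • y := by
    intro y c
    ext i j
    simp [Matrix.mul_apply, mul_comm]
  rw [this, h2]
  have := Finset.mem_range.1 hs
  have := Finset.mem_range.1 hi
  exact W.smul_mem _ (hW _ (by omega))

/-! ### Regular elements have minimal polynomial of full degree -/

theorem linearIndependent_pow_mul {k : Type*} [Field k] {N : ℕ} (x : Matrix (Fin N) (Fin N) k)
    (v : Matrix (Fin N) Unit k) (hv : ∀ p : k[X], aeval x p * v = 0 → minpoly k x ∣ p) :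
    LinearIndependent k fun j : Fin (minpoly k x).natDegree => x ^ (j : ℕ) * v := by
  rw [Fintype.linearIndependent_iff]
  intro c hc
  have hli := linearIndependent_pow (K := k) x
  rw [Fintype.linearIndependent_iff] at hli
  refine hli c ?_
  have h1 : aeval x (∑ j : Fin (minpoly k x).natDegree, C (c j) * X ^ (j : ℕ)) =
      ∑ j : Fin (minpoly k x).natDegree, c j • x ^ (j : ℕ) := by
    simp [Algebra.smul_def]
  rw [← h1]
  obtain ⟨r, hr⟩ := hv (∑ j : Fin (minpoly k x).natDegree, C (c j) * X ^ (j : ℕ)) (by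
    rw [h1, Matrix.sum_mul, ← hc]
    simp only [Matrix.smul_mul])
  rw [hr, map_mul, minpoly.aeval, zero_mul]

/-- A dual vector for one member of a linearly independent family of columns. -/
theorem exists_row {k : Type*} [Field k] {N d : ℕ} (b : Fin d → Matrix (Fin N) Unit k)
    (hb : LinearIndependent k b) (j₀ : Fin d) :
    ∃ a : Matrix Unit (Fin N) k, ∀ j, a * b j = if j = j₀ then 1 else 0 := by
  obtain ⟨g, hg⟩ := (Fintype.linearCombination k b).exists_leftInverse_of_injective
    (LinearMap.ker_eq_bot.2 (linearIndependent_iff_injective_fintypeLinearCombination.1 hb))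
  let φ : Matrix (Fin N) Unit k →ₗ[k] k := LinearMap.proj j₀ ∘ₗ g
  refine ⟨Matrix.of fun _ i => φ (Matrix.single i () 1), fun j => ?_⟩
  have h1 : ∀ y : Matrix (Fin N) Unit k,
      ∑ i, φ (Matrix.single i () 1) * y i () = φ y := by
    intro y
    conv_rhs => rw [Matrix.matrix_eq_sum_single y]
    rw [map_sum]
    refine Finset.sum_congr rfl fun i _ => ?_
    rw [Fintype.sum_unique, ← mul_one (y i default), ← smul_eq_mul (y i default) 1,
      ← Matrix.smul_single, map_smul, smul_eq_mul, mul_comm]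
    simp
  have h2 : φ (b j) = if j = j₀ then 1 else 0 := by
    have := LinearMap.congr_fun hg (Pi.single j 1)
    simp only [LinearMap.comp_apply, Fintype.linearCombination_apply_single, one_smul,
      LinearMap.id_apply] at this
    simp only [φ, LinearMap.comp_apply, this, LinearMap.proj_apply, Pi.single_apply, eq_comm]
  ext i i'
  rw [Matrix.mul_apply]
  simp only [Matrix.of_apply]
  rw [h1, h2]
  split_ifs <;> simp

/-- If `antiCent` has dimension at most `⌊N/2⌋`, then the minimal polynomial `p` of `x` has degree
`N`.

For a vector `v` generating a copy of `k[t]/(p)`, the divided differences `Y l` commute with `x`,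
and `D l = Y l - J⁻¹ (Y l)ᵀ J` is a linear map from rows to `antiCent`; so its kernel `K` has
dimension at least `⌈N/2⌉`. If `l ∈ K`, then `Y l` is self-adjoint, so its row space is the
image of its column space under `w ↦ wᵀ J`. Therefore `K` and `K x` both lie in the image of
`k[x] v`, of dimension at most `deg p`. They intersect in `0`, because `Y (l x) = Y l * x`
is skew-adjoint for `l ∈ K`. Hence `dim K + dim K x ≤ deg p`. The kernel of `l ↦ l x` on `K` is
at most a line, and is `0` for `N` even because there a nonzero self-adjoint rank one matrix
`w * l` with `l` proportional to `wᵀ J` does not exist. In both parities `N ≤ deg p` follows. -/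
theorem natDegree_minpoly_eq {k : Type*} [Field k] (h2 : (2 : k) ≠ 0) {N : ℕ} (hN : 2 ≤ N)
    (J J' : Matrix (Fin N) (Fin N) k) (hJJ : J * J' = 1) (hJJ' : J' * J = 1)
    (hJeven : Even N → Jᵀ = -J) (hJodd : ¬ Even N → Jᵀ = J)
    (x : Matrix (Fin N) (Fin N) k) (hx : xᵀ * J + J * x = 0)
    (hreg : Module.finrank k (antiCent k N J x) ≤ N / 2) :
    (minpoly k x).natDegree = N := by
  have hxJ : xᵀ * J = -(J * x) := eq_neg_of_add_eq_zero_left hx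
  have hJx : J * x = -(xᵀ * J) := by rw [hxJ, neg_neg]
  have : Nonempty (Fin N) := ⟨⟨0, by omega⟩⟩
  have hint : IsIntegral k x := Algebra.IsIntegral.isIntegral x
  have hmon := minpoly.monic hint
  have hpos := minpoly.natDegree_pos hint
  have hle : (minpoly k x).natDegree ≤ N := by
    have := Polynomial.natDegree_le_of_dvd (Matrix.minpoly_dvd_charpoly x)
      (Matrix.charpoly_monic x).ne_zero
    rwa [Matrix.charpoly_natDegree_eq_dim, Fintype.card_fin] at this
  obtain ⟨v, hv⟩ := exists_cyclic x
  have hli := linearIndependent_pow_mul x v hv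
  set p := minpoly k x with hpdef
  obtain ⟨a, ha⟩ := exists_row _ hli ⟨p.natDegree - 1, by omega⟩
  have ha' : ∀ j < p.natDegree, a * (x ^ j * v) = if j = p.natDegree - 1 then 1 else 0 := by
    intro j hj
    rw [ha ⟨j, hj⟩]
    simp [Fin.ext_iff]
  set Y := divDiff x p v with hY
  have hrec : ∀ l, a * Y l = l := divDiff_recover x p hmon hpos v a ha'
  have hYx : ∀ l, x * Y l = Y l * x := fun l => divDiff_comm x p v l (minpoly.aeval k x)
  obtain ⟨w₀, hw₀⟩ := divDiff_of_mul_eq_zero x p v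
  -- the anti-symmetrization of `Y`
  have hD : ∀ l, Y l - J' * (Y l)ᵀ * J ∈ antiCent k N J x := by
    intro l
    have hxJ' : x * J' = -(J' * xᵀ) := by
      calc x * J' = J' * (J * x) * J' := by rw [← mul_assoc J', hJJ', one_mul]
        _ = -(J' * xᵀ) := by
          rw [hJx, mul_neg, neg_mul, mul_assoc, mul_assoc xᵀ, hJJ, mul_one]
    refine ⟨?_, ?_⟩
    · have hYt : xᵀ * (Y l)ᵀ = (Y l)ᵀ * xᵀ := by
        rw [← transpose_mul, ← transpose_mul, hYx]
      rw [mul_sub, sub_mul, hYx]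
      congr 1
      calc x * (J' * (Y l)ᵀ * J) = (x * J') * (Y l)ᵀ * J := by simp only [mul_assoc]
        _ = -(J' * (xᵀ * (Y l)ᵀ) * J) := by rw [hxJ']; simp only [mul_assoc, neg_mul]
        _ = J' * (Y l)ᵀ * (-(xᵀ * J)) := by rw [hYt]; simp only [mul_assoc, mul_neg]
        _ = J' * (Y l)ᵀ * J * x := by rw [← hJx]; simp only [mul_assoc]
    · have hJ't : J'ᵀ * Jᵀ = 1 := by rw [← transpose_mul, hJJ, transpose_one]
      rw [transpose_sub, transpose_mul, transpose_mul, transpose_transpose, sub_mul, mul_sub,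
        ← mul_assoc J, ← mul_assoc J, hJJ, one_mul]
      have : Jᵀ * (Y l * J'ᵀ) * J = J * Y l := by
        by_cases hev : Even N
        · have h1 := hJeven hev
          have h3 : J'ᵀ * J = -1 := by rw [← hJ't, h1, mul_neg, neg_neg]
          rw [mul_assoc, mul_assoc, h3, h1]; simp
        · have h1 := hJodd hev
          have h3 : J'ᵀ * J = 1 := by rw [← hJ't, h1]
          rw [mul_assoc, mul_assoc, h3, h1, mul_one]
      rw [this]
      abel
  let D : Matrix Unit (Fin N) k →ₗ[k] antiCent k N J x :=
    { toFun := fun l => ⟨Y l - J' * (Y l)ᵀ * J, hD l⟩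
      map_add' := fun l l' => by
        ext1
        simp only [map_add, transpose_add, mul_add, add_mul, Submodule.coe_add]
        abel
      map_smul' := fun c l => by
        ext1
        simp only [map_smul, transpose_smul, mul_smul_comm, smul_mul_assoc, RingHom.id_apply,
          Submodule.coe_smul, smul_sub] }
  have hker : ∀ l, l ∈ LinearMap.ker D ↔ Y l = J' * (Y l)ᵀ * J := by
    intro l
    rw [LinearMap.mem_ker, ← sub_eq_zero (a := Y l), Subtype.ext_iff]
    rfl
  have hker' : ∀ l, l ∈ LinearMap.ker D → J * Y l = (Y l)ᵀ * J := by
    intro l hl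
    conv_lhs => rw [(hker l).1 hl]
    rw [← mul_assoc, ← mul_assoc, hJJ, one_mul]
  let R : Matrix Unit (Fin N) k →ₗ[k] Matrix Unit (Fin N) k :=
    { toFun := fun l => l * x
      map_add' := fun l l' => Matrix.add_mul _ _ _
      map_smul' := fun c l => Matrix.smul_mul _ _ _ }
  let β : Matrix (Fin N) Unit k →ₗ[k] Matrix Unit (Fin N) k :=
    { toFun := fun w => wᵀ * J
      map_add' := fun l l' => by rw [transpose_add, Matrix.add_mul]
      map_smul' := fun c l => by rw [transpose_smul, Matrix.smul_mul]; rfl }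
  let W := Submodule.span k (Set.range fun j : Fin p.natDegree => x ^ (j : ℕ) * v)
  have hW : Module.finrank k W = p.natDegree := by
    simpa using finrank_span_eq_card hli
  have hYW : ∀ l u, Y l * u ∈ W := fun l u => divDiff_mul_col x p v u l W
    fun j hj => Submodule.subset_span ⟨⟨j, hj⟩, rfl⟩
  have hZ : Module.finrank k (W.map β) ≤ p.natDegree := hW ▸ Submodule.finrank_map_le β W
  -- self-adjointness of `Y l` turns a combination of its rows into a combination of its columns
  have hβ : ∀ l ∈ LinearMap.ker D, ∀ b : Matrix Unit (Fin N) k, b * Y l = β (Y l * (b * J')ᵀ) := by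
    intro l hl b
    change b * Y l = (Y l * (b * J')ᵀ)ᵀ * J
    conv_lhs => rw [(hker l).1 hl]
    rw [transpose_mul, transpose_transpose]
    simp only [Matrix.mul_assoc]
  have hKZ : LinearMap.ker D ≤ W.map β := by
    intro l hl
    rw [← hrec l, hβ l hl]
    exact Submodule.mem_map_of_mem (hYW _ _)
  have hRKZ : (LinearMap.ker D).map R ≤ W.map β := by
    rintro _ ⟨l, hl, rfl⟩
    change l * x ∈ _
    rw [← hrec l, Matrix.mul_assoc, ← hYx, ← Matrix.mul_assoc, hβ l hl]
    exact Submodule.mem_map_of_mem (hYW _ _)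
  have hY0 : ∀ l, Y l = 0 → l = 0 := fun l hl => by rw [← hrec l, hl, Matrix.mul_zero]
  -- on the intersection `Y (l * x)` is both self-adjoint and skew-adjoint
  have hdisj : LinearMap.ker D ⊓ (LinearMap.ker D).map R = ⊥ := by
    rw [Submodule.eq_bot_iff]
    rintro _ ⟨hlx, l, hl, rfl⟩
    have h3 := hker' _ hlx
    change J * Y (l * x) = (Y (l * x))ᵀ * J at h3
    change l * x = 0
    apply hY0
    rw [hY, divDiff_mul, ← hY] at h3 ⊢
    rw [transpose_mul, mul_assoc, ← hker' l hl, ← mul_assoc xᵀ, hxJ, neg_mul, mul_assoc J x,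
      hYx, eq_neg_iff_add_eq_zero, ← two_smul k, smul_eq_zero] at h3
    have h4 := h3.resolve_left h2
    rw [← one_mul (Y l * x), ← hJJ', mul_assoc, h4, mul_zero]
  have hsum : Module.finrank k (LinearMap.ker D) + Module.finrank k ((LinearMap.ker D).map R) ≤
      p.natDegree := by
    rw [← Submodule.finrank_sup_add_finrank_inf_eq, hdisj, finrank_bot, add_zero]
    exact (Submodule.finrank_mono (sup_le hKZ hRKZ)).trans hZ
  let R' := R.domRestrict (LinearMap.ker D)
  have hR'range : LinearMap.range R' = (LinearMap.ker D).map R := by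
    exact LinearMap.range_domRestrict _ _
  have hrk := LinearMap.finrank_range_add_finrank_ker R'
  rw [hR'range] at hrk
  -- on rows killed by `x`, `Y l = w₀ * l`, so `l` is determined up to a scalar by `w₀`
  have hspan : ∀ l ∈ LinearMap.ker D, l * x = 0 → ∃ c : k, l = c • β w₀ := by
    intro l hl hlx
    refine ⟨(l * (a * J')ᵀ) () (), ?_⟩
    have h4 := hβ l hl a
    rw [hrec, hw₀ l hlx, Matrix.mul_assoc] at h4
    have h5 : ∀ (y : Matrix (Fin N) Unit k) (c : Matrix Unit Unit k), y * c = c () () • y := by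
      intro y c
      ext i j
      simp [Matrix.mul_apply, mul_comm]
    rw [h5, map_smul] at h4
    exact h4
  have hker1 : Module.finrank k (LinearMap.ker R') ≤ 1 := by
    have h6 : Submodule.map (LinearMap.ker D).subtype (LinearMap.ker R') ≤
        Submodule.span k {β w₀} := by
      rintro _ ⟨⟨l, hl⟩, hlx, rfl⟩
      obtain ⟨c, hc⟩ := hspan l hl hlx
      exact Submodule.mem_span_singleton.2 ⟨c, hc.symm⟩
    rw [← Submodule.finrank_map_subtype_eq]
    exact (Submodule.finrank_mono h6).trans ((finrank_span_le_card _).trans (by simp))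
  have hker0 : Even N → Module.finrank k (LinearMap.ker R') = 0 := by
    intro hev
    have h6 : LinearMap.ker R' = ⊥ := by
      rw [Submodule.eq_bot_iff]
      rintro ⟨l, hl⟩ hlx
      have hlx' : l * x = 0 := hlx
      obtain ⟨c, hc⟩ := hspan l hl hlx
      have h7 := hker' l hl
      rw [hw₀ l hlx'] at h7
      have h8 : lᵀ = -(c • (J * w₀)) := by
        rw [hc]
        change (c • (w₀ᵀ * J))ᵀ = _
        rw [transpose_smul, transpose_mul, transpose_transpose, hJeven hev, Matrix.neg_mul, smul_neg]
      have h9 : (w₀ * l)ᵀ * J = -(J * (w₀ * l)) := by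
        rw [transpose_mul, h8, Matrix.neg_mul, Matrix.neg_mul, hc]
        change -(c • (J * w₀) * w₀ᵀ * J) = -(J * (w₀ * (c • (w₀ᵀ * J))))
        simp only [Matrix.mul_smul, Matrix.smul_mul, Matrix.mul_assoc]
      rw [h9, eq_neg_iff_add_eq_zero, ← two_smul k, smul_eq_zero] at h7
      have h10 := h7.resolve_left h2
      have h11 : w₀ * l = 0 := by
        rw [← Matrix.one_mul (w₀ * l), ← hJJ', mul_assoc, h10, mul_zero]
      ext1
      exact hY0 l ((hw₀ l hlx').trans h11)
    rw [h6, finrank_bot]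
  have hdim := LinearMap.finrank_range_add_finrank_ker D
  have hrange : Module.finrank k (LinearMap.range D) ≤ N / 2 :=
    (Submodule.finrank_le _).trans hreg
  have hrow : Module.finrank k (Matrix Unit (Fin N) k) = N := by
    simp [Module.finrank_matrix]
  rw [hrow] at hdim
  by_cases hev : Even N
  · have := hker0 hev
    obtain ⟨r, hr⟩ := hev
    omega
  · rw [Nat.not_even_iff] at hev
    omega

/-! ### The commutant -/

/-- When the minimal polynomial has degree `N`, the matrices commuting with `x` are the polynomials
in `x`: on a cyclic vector `g` agrees with some `f(x)`, hence it does everywhere. -/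
theorem exists_aeval_of_commute {k : Type*} [Field k] {N : ℕ} (x : Matrix (Fin N) (Fin N) k)
    (hdeg : (minpoly k x).natDegree = N) (g : Matrix (Fin N) (Fin N) k) (hg : g * x = x * g) :
    ∃ f : k[X], aeval x f = g := by
  obtain ⟨v, hv⟩ := exists_cyclic x
  have hli := linearIndependent_pow_mul x v hv
  have hspan := hli.span_eq_top_of_card_eq_finrank' (by simp [hdeg, Module.finrank_matrix])
  obtain ⟨c, hc⟩ := (Submodule.mem_span_range_iff_exists_fun k).1 (hspan ▸ Submodule.mem_top (x := g * v))
  refine ⟨∑ j : Fin (minpoly k x).natDegree, C (c j) * X ^ (j : ℕ), ?_⟩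
  set f : k[X] := ∑ j : Fin (minpoly k x).natDegree, C (c j) * X ^ (j : ℕ) with hf
  have hfv : aeval x f * v = g * v := by
    rw [← hc, hf, map_sum, Matrix.sum_mul]
    simp only [map_mul, aeval_C, map_pow, aeval_X, ← Algebra.smul_def, Matrix.smul_mul]
  have hcomm : Commute (aeval x f - g) x := by
    refine Commute.sub_left ?_ hg
    have := (Commute.all f X).map (aeval x)
    rwa [aeval_X] at this
  let L : Matrix (Fin N) Unit k →ₗ[k] Matrix (Fin N) Unit k :=
    { toFun := fun u => (aeval x f - g) * u
      map_add' := fun l l' => Matrix.mul_add _ _ _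
      map_smul' := fun c l => Matrix.mul_smul _ _ _ }
  have hL : L = 0 := by
    refine LinearMap.ext_on_range hspan fun j => ?_
    change (aeval x f - g) * (x ^ (j : ℕ) * v) = 0
    rw [← Matrix.mul_assoc, (hcomm.pow_right j).eq, Matrix.mul_assoc, Matrix.sub_mul, hfv,
      sub_self, Matrix.mul_zero]
  have h0 : aeval x f - g = 0 := by
    ext i j
    have h1 : (aeval x f - g) * Matrix.single j () (1 : k) = 0 := LinearMap.congr_fun hL _
    have h2 := congrFun (congrFun h1 i) ()
    rwa [Matrix.mul_single_apply_same, mul_one] at h2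
  exact sub_eq_zero.1 h0

/-! ### Hilbert 90 for finite rings with involution -/

/-- A form of Hilbert 90 for a finite commutative ring with involution `θ` in which `2` is
invertible: if `f * θ f = 1` and `f ≡ 1` modulo an element `t` with `θ t = -t`, then `f = h / θ h`
for some unit `h`.

Any unit of the form `h = r + f * θ r` works. The element `r` is found by the Chinese remainder
theorem: modulo a maximal ideal `r` is congruent to `t` if `f ≡ -1` there, and to `1`
otherwise. The congruence hypothesis ensures that `t` is invertible where `f ≡ -1`. -/
theorem exists_unit_of_norm_one {R : Type*} [CommRing R] [Finite R] (θ : R →+* R)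
    (hθ : ∀ a, θ (θ a) = a) (t : R) (ht : θ t = -t) (h2 : IsUnit (2 : R))
    (f : R) (hf : f * θ f = 1) (hft : t ∣ f - 1) :
    ∃ h : Rˣ, f * θ h = h := by
  classical
  let c : MaximalSpectrum R → R := fun P => if f + 1 ∈ P.asIdeal then t else 1
  obtain ⟨r, hr⟩ := Ideal.exists_forall_sub_mem_ideal (I := fun P : MaximalSpectrum R => P.asIdeal)
    (fun P Q hPQ => Ideal.isCoprime_of_isMaximal (fun h => hPQ (MaximalSpectrum.ext h))) c
  have h2P : ∀ P : MaximalSpectrum R, (2 : R) ∉ P.asIdeal := fun P h =>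
    P.isMaximal.ne_top (Ideal.eq_top_of_isUnit_mem _ h h2)
  have key : IsUnit (r + f * θ r) := by
    by_contra hu
    obtain ⟨M, hM, hmem⟩ := exists_max_ideal_of_mem_nonunits hu
    let P : MaximalSpectrum R := ⟨M, hM⟩
    have hbij : Function.Surjective θ := fun a => ⟨θ a, hθ a⟩
    let Q : MaximalSpectrum R := ⟨M.comap θ, Ideal.comap_isMaximal_of_surjective θ hbij⟩
    have h1 : r - c P ∈ M := hr P
    have h3 : θ (r - c Q) ∈ M := hr Q
    -- `f + 1 = f * θ (f + 1)`, so both maximal ideals `M` and `θ⁻¹ M` fall in the same case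
    have hc : f + 1 ∈ M.comap θ ↔ f + 1 ∈ M := by
      rw [Ideal.mem_comap]
      constructor
      · intro h
        have := M.mul_mem_left f h
        rwa [map_add, map_one, mul_add, hf, mul_one, add_comm] at this
      · intro h
        have := M.mul_mem_left (θ f) h
        rwa [mul_add, mul_comm, hf, mul_one, add_comm, ← map_one θ, ← map_add] at this
    have h4 : c P + f * θ (c Q) ∈ M := by
      have h5 : (r + f * θ r) - (r - c P) - f * θ (r - c Q) ∈ M :=
        M.sub_mem (M.sub_mem hmem h1) (M.mul_mem_left f h3)
      rw [map_sub] at h5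
      convert h5 using 1
      ring
    by_cases hfM : f + 1 ∈ M
    · have e1 : c P = t := if_pos hfM
      have e2 : c Q = t := if_pos (hc.2 hfM)
      rw [e1, e2, ht] at h4
      have h6 : 2 * t ∈ M := by
        have := M.add_mem h4 (M.mul_mem_right t hfM)
        convert this using 1
        ring
      rcases hM.isPrime.mem_or_mem h6 with h | h
      · exact h2P P h
      · have h7 : f - 1 ∈ M := Ideal.mem_of_dvd M hft h
        have h8 := M.sub_mem hfM h7
        apply h2P P
        convert h8 using 1
        ring
    · have e1 : c P = 1 := if_neg hfM
      have e2 : c Q = 1 := if_neg (fun h => hfM (hc.1 h))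
      rw [e1, e2, map_one, mul_one, add_comm] at h4
      exact hfM h4
  obtain ⟨h, hh⟩ := key
  refine ⟨h, ?_⟩
  rw [hh, map_add, map_mul, hθ, mul_add, ← mul_assoc, hf, one_mul, add_comm]

/-! ### Units of `k[t]/(f)` -/

/-- The finite set of monic irreducible divisors of `f` (empty for `f = 0`). -/
noncomputable def irrDivisors {k : Type*} [Field k] (f : k[X]) : Finset k[X] :=
  (UniqueFactorizationMonoid.normalizedFactors f).toFinset

theorem mem_irrDivisors {k : Type*} [Field k] {f : k[X]} (hf : f ≠ 0) {p : k[X]} :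
    p ∈ irrDivisors f ↔ p.Monic ∧ Irreducible p ∧ p ∣ f := by
  rw [irrDivisors, Multiset.mem_toFinset, Polynomial.mem_normalizedFactors_iff hf]
  tauto

theorem card_adjoinRoot {k : Type*} [Field k] [Fintype k] (f : k[X]) (hf : f ≠ 0) :
    Finite (AdjoinRoot f) ∧ Nat.card (AdjoinRoot f) = Fintype.card k ^ f.natDegree := by
  have : Module.Finite k (AdjoinRoot f) := (AdjoinRoot.powerBasis hf).finite
  refine ⟨Module.finite_of_finite k, ?_⟩
  rw [Module.natCard_eq_pow_finrank (K := k), (AdjoinRoot.powerBasis hf).finrank,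
    AdjoinRoot.powerBasis_dim, Nat.card_eq_fintype_card]

/-- All fibres of a surjective homomorphism of abelian groups have the size of its kernel. -/
theorem card_preimage_addHom {A B : Type*} [AddCommGroup A] [AddCommGroup B] (ψ : A →+ B)
    (hψ : Function.Surjective ψ) (T : B → Prop) :
    Nat.card {a // T (ψ a)} = Nat.card {b // T b} * Nat.card ψ.ker := by
  obtain ⟨s, hs⟩ := hψ.hasRightInverse
  rw [← Nat.card_prod]
  refine Nat.card_congr
    { toFun := fun a => (⟨ψ a, a.2⟩, ⟨a - s (ψ a), by rw [AddMonoidHom.mem_ker, map_sub, hs, sub_self]⟩)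
      invFun := fun p => ⟨p.2 + s p.1, by
        rw [map_add, hs, (AddMonoidHom.mem_ker).1 p.2.2, zero_add]; exact p.1.2⟩
      left_inv := fun a => by simp
      right_inv := fun p => by
        obtain ⟨⟨b, hb⟩, ⟨c, hc⟩⟩ := p
        have hc' := (AddMonoidHom.mem_ker).1 hc
        simp [hs b, hc'] }

theorem isUnit_mk_iff {k : Type*} [Field k] (f g : k[X]) :
    IsUnit (AdjoinRoot.mk f g) ↔ IsCoprime g f := by
  constructor
  · rintro ⟨u, hu⟩
    obtain ⟨r, hr⟩ := AdjoinRoot.mk_surjective (↑u⁻¹ : AdjoinRoot f)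
    have h1 : AdjoinRoot.mk f (r * g) = AdjoinRoot.mk f 1 := by
      rw [map_mul, hr, ← hu, map_one, Units.inv_mul]
    obtain ⟨c, hc⟩ := AdjoinRoot.mk_eq_mk.1 h1
    exact ⟨r, -c, by linear_combination hc⟩
  · rintro ⟨a, b, hab⟩
    refine IsUnit.of_mul_eq_one (AdjoinRoot.mk f a) ?_
    have := congrArg (AdjoinRoot.mk f) hab
    rw [map_add, map_mul, map_mul, AdjoinRoot.mk_self, mul_zero, add_zero, map_one] at this
    rw [mul_comm, this]

theorem isCoprime_iff_irrDivisors {k : Type*} [Field k] {f : k[X]} (hf : f ≠ 0) (g : k[X]) :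
    IsCoprime g f ↔ ∀ p ∈ irrDivisors f, ¬ p ∣ g := by
  constructor
  · intro h p hp hpg
    obtain ⟨-, hirr, hpf⟩ := (mem_irrDivisors hf).1 hp
    exact hirr.not_isUnit (h.isUnit_of_dvd' hpg hpf)
  · intro h
    refine isCoprime_of_irreducible_dvd (fun h0 => hf h0.2) fun z hz hzg hzf => ?_
    have hm := (associated_normalize z).symm
    exact h (normalize z) ((mem_irrDivisors hf).2 ⟨Polynomial.monic_normalize hz.ne_zero,
      (associated_normalize z).irreducible hz, hm.dvd.trans hzf⟩) (hm.dvd.trans hzg)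

/-- The analogue of the product formula for the totient of an integer:
`|(k[t]/(f))ˣ| = q ^ deg f * ∏ (1 - q ^ (-deg p))` over the monic irreducible `p` dividing `f`. An element of `k[t]/(f)` is a unit iff its image in
each residue field `k[t]/(p)` is nonzero, and the map to the product of the residue fields is
surjective by the Chinese remainder theorem. -/
theorem card_units_adjoinRoot {k : Type*} [Field k] [Fintype k] (f : k[X]) (hf : f ≠ 0) :
    (Nat.card (AdjoinRoot f)ˣ : ℚ) = (Fintype.card k : ℚ) ^ f.natDegree *
      ∏ p ∈ irrDivisors f, (1 - ((Fintype.card k : ℚ) ^ p.natDegree)⁻¹) := by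
  let ι := {p // p ∈ irrDivisors f}
  have hι : ∀ p : ι, p.1.Monic ∧ Irreducible p.1 ∧ p.1 ∣ f := fun p => (mem_irrDivisors hf).1 p.2
  let ψ : AdjoinRoot f →+ ((p : ι) → AdjoinRoot p.1) :=
    AddMonoidHom.mk' (fun a p => AdjoinRoot.algHomOfDvd k _ _ (hι p).2.2 a)
      (fun a b => by ext p; exact map_add _ _ _)
  have hψmk : ∀ g p, ψ (AdjoinRoot.mk f g) p = AdjoinRoot.mk p.1 g := by
    intro g p
    change AdjoinRoot.algHomOfDvd k _ _ (hι p).2.2 (AdjoinRoot.mk f g) = _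
    rw [← AdjoinRoot.aeval_eq, ← Polynomial.aeval_algHom_apply, AdjoinRoot.algHomOfDvd_root,
      AdjoinRoot.aeval_eq]
  have hψ : Function.Surjective ψ := by
    intro b
    obtain ⟨g, hg⟩ := Ideal.pi_quotient_surjective (I := fun p : ι => Ideal.span {p.1})
      (fun p p' hpp => by
        rw [Function.onFun, Ideal.isCoprime_span_singleton_iff]
        refine ((hι p).2.1.coprime_iff_not_dvd).2 fun hd => hpp (Subtype.ext ?_)
        exact eq_of_monic_of_associated (hι p).1 (hι p').1
          ((hι p).2.1.associated_of_dvd (hι p').2.1 hd)) b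
    exact ⟨AdjoinRoot.mk f g, funext fun p => (hψmk g p).trans (hg p)⟩
  have hunit : ∀ a, IsUnit a ↔ ∀ p, ψ a p ≠ 0 := by
    intro a
    obtain ⟨g, rfl⟩ := AdjoinRoot.mk_surjective a
    rw [isUnit_mk_iff, isCoprime_iff_irrDivisors hf]
    simp only [hψmk, ne_eq, AdjoinRoot.mk_eq_zero]
    exact ⟨fun h p => h p.1 p.2, fun h p hp => h ⟨p, hp⟩⟩
  have h1 := card_preimage_addHom ψ hψ (fun b => ∀ p, b p ≠ 0)
  have h2 := card_preimage_addHom ψ hψ (fun _ => True)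
  have e1 : Nat.card (AdjoinRoot f)ˣ = Nat.card {a // ∀ p, ψ a p ≠ 0} := by
    rw [Nat.card_congr (Equiv.subtypeEquivRight hunit).symm]
    exact Nat.card_congr
      { toFun := fun u => ⟨u, u.isUnit⟩
        invFun := fun a => a.2.unit
        left_inv := fun u => Units.ext rfl
        right_inv := fun a => rfl }
  have e2 : Nat.card {a : AdjoinRoot f // True} = Fintype.card k ^ f.natDegree := by
    rw [← (card_adjoinRoot f hf).2]
    exact Nat.card_congr (Equiv.subtypeUnivEquiv fun _ => trivial)
  have hq : (Fintype.card k : ℚ) ≠ 0 := Nat.cast_ne_zero.2 Fintype.card_ne_zero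
  have e3 : Nat.card {b : (p : ι) → AdjoinRoot p.1 // True} =
      ∏ p ∈ irrDivisors f, Fintype.card k ^ p.natDegree := by
    rw [Nat.card_congr (Equiv.subtypeUnivEquiv fun _ => trivial), Nat.card_pi,
      ← Finset.prod_coe_sort (irrDivisors f)]
    exact Finset.prod_congr rfl fun p _ => (card_adjoinRoot _ (hι p).1.ne_zero).2
  have e4 : (Nat.card {b : (p : ι) → AdjoinRoot p.1 // ∀ p, b p ≠ 0} : ℚ) =
      ∏ p ∈ irrDivisors f, ((Fintype.card k : ℚ) ^ p.natDegree - 1) := by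
    rw [Nat.card_congr (Equiv.subtypePiEquivPi (p := fun (p : ι) (b : AdjoinRoot p.1) => b ≠ 0)),
      Nat.card_pi, ← Finset.prod_coe_sort (irrDivisors f), Nat.cast_prod]
    refine Finset.prod_congr rfl fun p _ => ?_
    obtain ⟨hfin, hcard⟩ := card_adjoinRoot p.1 (hι p).1.ne_zero
    have := Nat.card_congr (Equiv.optionSubtypeNe (0 : AdjoinRoot p.1))
    rw [Finite.card_option, hcard] at this
    have h3 : ((Nat.card {b : AdjoinRoot p.1 // b ≠ 0} + 1 : ℕ) : ℚ) =
      ((Fintype.card k ^ p.1.natDegree : ℕ) : ℚ) := by exact_mod_cast this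
    push_cast at h3
    rw [← h3]; ring
  rw [e2, e3] at h2
  rw [e1, h1]
  have h2' : (Fintype.card k : ℚ) ^ f.natDegree =
      (∏ p ∈ irrDivisors f, (Fintype.card k : ℚ) ^ p.natDegree) * (Nat.card ψ.ker : ℚ) := by
    exact_mod_cast h2
  rw [Nat.cast_mul, e4, h2']
  have e5 : ∏ p ∈ irrDivisors f, ((Fintype.card k : ℚ) ^ p.natDegree - 1) =
      (∏ p ∈ irrDivisors f, (Fintype.card k : ℚ) ^ p.natDegree) *
      ∏ p ∈ irrDivisors f, (1 - ((Fintype.card k : ℚ) ^ p.natDegree)⁻¹) := by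
    rw [← Finset.prod_mul_distrib]
    refine Finset.prod_congr rfl fun p _ => ?_
    rw [mul_sub, mul_inv_cancel₀ (pow_ne_zero _ hq), mul_one]
  rw [e5]; ring

/-! ### Even polynomials and the involution `t ↦ -t` -/

theorem coeff_comp_neg_X' {k : Type*} [Field k] (f : k[X]) (n : ℕ) :
    (f.comp (-X)).coeff n = (-1) ^ n * f.coeff n := by
  rw [← neg_one_mul, ← C_1, ← C_neg, Polynomial.comp_C_mul_X_coeff, mul_comm]

theorem exists_expand_of_even {k : Type*} [Field k] (h2 : (2 : k) ≠ 0) {f : k[X]}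
    (hf : f.comp (-X) = f) : ∃ p, expand k 2 p = f := by
  refine ⟨contract 2 f, ?_⟩
  ext n
  rw [coeff_expand two_pos]
  split_ifs with h
  · rw [coeff_contract two_ne_zero, Nat.div_mul_cancel h]
  · have := coeff_comp_neg_X' f n
    rw [hf, (Nat.not_even_iff_odd.1 (by rwa [even_iff_two_dvd])).neg_one_pow] at this
    have h3 : 2 * f.coeff n = 0 := by linear_combination this
    exact ((mul_eq_zero.1 h3).resolve_left h2).symm

theorem expand_two_comp_neg_X {k : Type*} [Field k] (p : k[X]) :
    (expand k 2 p).comp (-X) = expand k 2 p := by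
  rw [expand_eq_comp_X_pow, comp_assoc]
  simp

theorem X_dvd_of_odd {k : Type*} [Field k] (h2 : (2 : k) ≠ 0) {f : k[X]}
    (hf : f.comp (-X) = -f) : X ∣ f := by
  rw [X_dvd_iff]
  have := coeff_comp_neg_X' f 0
  rw [hf, coeff_neg] at this
  have h3 : 2 * f.coeff 0 = 0 := by linear_combination -this
  exact (mul_eq_zero.1 h3).resolve_left h2

/-- Divisibility can be tested after the substitution `t ↦ t²`, because a quotient of even
polynomials is even. -/
theorem expand_dvd_expand_iff {k : Type*} [Field k] (h2 : (2 : k) ≠ 0) {g p : k[X]}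
    (hg : g ≠ 0) : expand k 2 g ∣ expand k 2 p ↔ g ∣ p := by
  constructor
  · rintro ⟨q, hq⟩
    have hg' : expand k 2 g ≠ 0 := (expand_ne_zero two_pos).2 hg
    have h1 := congrArg (fun f : k[X] => f.comp (-X)) hq
    simp only [mul_comp, expand_two_comp_neg_X] at h1
    rw [hq] at h1
    obtain ⟨r, hr⟩ := exists_expand_of_even h2 (mul_left_cancel₀ hg' h1).symm
    have hpr : expand k 2 p = expand k 2 (g * r) := by rw [map_mul, hr, hq]
    exact ⟨r, (expand_inj (Nat.zero_lt_succ 1)).1 hpr⟩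
  · rintro ⟨c, rfl⟩
    rw [map_mul]
    exact dvd_mul_right _ _

/-- The even polynomials divisible by `m`, where `m(-t) = ± m(t)`, are the `p(t²)` with `g ∣ p`,
where `g(t²)` is `m` or `t * m`, whichever is even. The degree of `g` is `⌈deg m / 2⌉`. -/
theorem exists_half {k : Type*} [Field k] (h2 : (2 : k) ≠ 0) {m : k[X]} (hm : m.Monic)
    (hσ : m.comp (-X) = (-1) ^ m.natDegree * m) :
    ∃ g : k[X], g.Monic ∧ g.natDegree + m.natDegree / 2 = m.natDegree ∧
      ((Even m.natDegree ∧ expand k 2 g = m) ∨ (Odd m.natDegree ∧ expand k 2 g = X * m)) ∧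
      ∀ p, m ∣ expand k 2 p ↔ g ∣ p := by
  rcases Nat.even_or_odd m.natDegree with hN | hN
  · rw [hN.neg_one_pow, one_mul] at hσ
    obtain ⟨g, hg⟩ := exists_expand_of_even h2 hσ
    have hgm : g.Monic := (monic_expand_iff two_pos).1 (hg ▸ hm)
    refine ⟨g, hgm, ?_, Or.inl ⟨hN, hg⟩, fun p => ?_⟩
    · rw [← hg, natDegree_expand]; omega
    · rw [← hg, expand_dvd_expand_iff h2 hgm.ne_zero]
  · rw [hN.neg_one_pow, neg_one_mul] at hσ
    have hσ' : (X * m).comp (-X) = X * m := by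
      rw [mul_comp, hσ, X_comp]; ring
    obtain ⟨g, hg⟩ := exists_expand_of_even h2 hσ'
    have hgm : g.Monic := (monic_expand_iff two_pos).1 (hg ▸ monic_X.mul hm)
    refine ⟨g, hgm, ?_, Or.inr ⟨hN, hg⟩, fun p => ?_⟩
    · have := natDegree_expand 2 g
      rw [hg, natDegree_X_mul hm.ne_zero] at this
      omega
    · constructor
      · rintro ⟨q, hq⟩
        have h1 := congrArg (fun f : k[X] => f.comp (-X)) hq
        simp only [mul_comp, expand_two_comp_neg_X] at h1
        rw [hq, hσ] at h1
        have hqo : q.comp (-X) = -q :=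
          mul_left_cancel₀ hm.ne_zero (by linear_combination h1)
        obtain ⟨r, hr⟩ := X_dvd_of_odd h2 hqo
        rw [← expand_dvd_expand_iff h2 hgm.ne_zero, hg]
        exact ⟨r, by rw [hq, hr]; ring⟩
      · intro h
        have h3 := map_dvd (expand k 2) h
        rw [hg] at h3
        exact (dvd_mul_left _ _).trans h3

/-- Let `θ` be the involution `t ↦ -t` of `R = k[t]/(m)`. The homomorphism `h ↦ h / θ h` on `Rˣ` has
image `{f | f * θ f = 1, t ∣ f - 1}` by `exists_unit_of_norm_one`. Its kernel consists of the
`θ`-fixed units, which are the classes of even polynomials, hence the units of `k[s]/(g)` with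
`s = t²`. The two orders therefore multiply to `|Rˣ|`. -/
theorem exists_involution_card {k : Type*} [Field k] [Fintype k] (h2 : (2 : k) ≠ 0) {m g : k[X]}
    (hm : m.Monic) (hσ : m ∣ m.comp (-X)) (hg : ∀ p, m ∣ expand k 2 p ↔ g ∣ p) :
    ∃ θ : AdjoinRoot m →+* AdjoinRoot m,
      (∀ p, θ (AdjoinRoot.mk m p) = AdjoinRoot.mk m (p.comp (-X))) ∧
      Nat.card {f : AdjoinRoot m // f * θ f = 1 ∧ AdjoinRoot.root m ∣ f - 1} *
        Nat.card (AdjoinRoot g)ˣ = Nat.card (AdjoinRoot m)ˣ := by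
  have htwo : (2 : AdjoinRoot m) = AdjoinRoot.mk m (C 2) := by
    rw [map_ofNat C, map_ofNat]
  let θ : AdjoinRoot m →+* AdjoinRoot m := Ideal.Quotient.lift _
    ((AdjoinRoot.mk m).comp (compRingHom (-X))) (by
      intro a ha
      obtain ⟨c, rfl⟩ := Ideal.mem_span_singleton.1 ha
      rw [RingHom.comp_apply, AdjoinRoot.mk_eq_zero, coe_compRingHom_apply, mul_comp]
      exact dvd_mul_of_dvd_left hσ _)
  have hθ : ∀ p, θ (AdjoinRoot.mk m p) = AdjoinRoot.mk m (p.comp (-X)) := fun p => rfl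
  have hθθ : ∀ a, θ (θ a) = a := by
    intro a
    obtain ⟨p, rfl⟩ := AdjoinRoot.mk_surjective a
    rw [hθ, hθ, comp_neg_X_comp_neg_X]
  have ht : θ (AdjoinRoot.root m) = - AdjoinRoot.root m := by
    rw [← AdjoinRoot.mk_X, hθ, X_comp, map_neg]
  let E : AdjoinRoot g →+* AdjoinRoot m := Ideal.Quotient.lift _
    ((AdjoinRoot.mk m).comp (expand k 2 : k[X] →ₐ[k] k[X]).toRingHom) (by
      intro a ha
      rw [RingHom.comp_apply, AdjoinRoot.mk_eq_zero]
      exact (hg a).2 (Ideal.mem_span_singleton.1 ha))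
  have hE : ∀ p, E (AdjoinRoot.mk g p) = AdjoinRoot.mk m (expand k 2 p) := fun p => rfl
  have hEinj : Function.Injective E := by
    rw [injective_iff_map_eq_zero]
    intro a ha
    obtain ⟨p, rfl⟩ := AdjoinRoot.mk_surjective a
    rw [hE, AdjoinRoot.mk_eq_zero, hg] at ha
    rwa [AdjoinRoot.mk_eq_zero]
  have hEfix : ∀ a, θ (E a) = E a := by
    intro a
    obtain ⟨p, rfl⟩ := AdjoinRoot.mk_surjective a
    rw [hE, hθ, expand_two_comp_neg_X]
  have hErange : ∀ b, θ b = b → ∃ a, E a = b := by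
    intro b hb
    obtain ⟨p, rfl⟩ := AdjoinRoot.mk_surjective b
    obtain ⟨r, hr⟩ := exists_expand_of_even h2 (f := C (2⁻¹) * (p + p.comp (-X)))
      (by rw [mul_comp, add_comp, comp_neg_X_comp_neg_X, C_comp, add_comm])
    -- `θ` fixes the class of `p`, so `p` is congruent to its even part
    refine ⟨AdjoinRoot.mk g r, ?_⟩
    rw [hE, hr, map_mul, map_add, ← hθ, hb, ← two_mul, ← mul_assoc]
    have : (AdjoinRoot.mk m) (C 2⁻¹) * 2 = 1 := by
      rw [htwo, ← map_mul, ← C_mul,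
        inv_mul_cancel₀ h2, C_1, map_one]
    rw [this, one_mul]
  have h2u : IsUnit (2 : AdjoinRoot m) := by
    rw [htwo]
    exact ((isUnit_C.2 (isUnit_iff_ne_zero.2 h2)).map _)
  refine ⟨θ, hθ, ?_⟩
  have hfin : Finite (AdjoinRoot m) := (card_adjoinRoot m hm.ne_zero).1
  -- the homomorphism `h ↦ h / θ h`
  let Θ : (AdjoinRoot m)ˣ →* (AdjoinRoot m)ˣ := Units.map θ.toMonoidHom
  let φ : (AdjoinRoot m)ˣ →* (AdjoinRoot m)ˣ :=
    { toFun := fun h => h * (Θ h)⁻¹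
      map_one' := by simp
      map_mul' := fun a b => by rw [map_mul, mul_inv]; exact mul_mul_mul_comm _ _ _ _ }
  have hφ : ∀ h, φ h = h * (Θ h)⁻¹ := fun h => rfl
  have hΘ : ∀ h, ((Θ h : (AdjoinRoot m)ˣ) : AdjoinRoot m) = θ h := fun h => rfl
  have hΘΘ : ∀ h, Θ (Θ h) = h := fun h => Units.ext (hθθ _)
  have hdvd : ∀ a, AdjoinRoot.root m ∣ a - θ a := by
    intro a
    obtain ⟨p, rfl⟩ := AdjoinRoot.mk_surjective a
    rw [hθ, ← map_sub, ← AdjoinRoot.mk_X]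
    refine map_dvd _ ?_
    rw [X_dvd_iff, coeff_sub, coeff_comp_neg_X']; simp
  have hker : Nat.card φ.ker = Nat.card (AdjoinRoot g)ˣ := by
    symm
    refine Nat.card_congr (Equiv.ofBijective (fun u => ⟨Units.map E.toMonoidHom u, ?_⟩) ⟨?_, ?_⟩)
    · rw [MonoidHom.mem_ker, hφ, mul_inv_eq_one]
      exact Units.ext (hEfix u).symm
    · intro u v huv
      exact Units.ext (hEinj (congrArg Units.val (Subtype.ext_iff.1 huv)))
    · rintro ⟨u, hu⟩
      rw [MonoidHom.mem_ker, hφ, mul_inv_eq_one] at hu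
      have hu2 : u⁻¹ = Θ u⁻¹ := by rw [map_inv, ← hu]
      obtain ⟨a, ha⟩ := hErange u (congrArg Units.val hu).symm
      obtain ⟨b, hb⟩ := hErange (u⁻¹ : (AdjoinRoot m)ˣ) (congrArg Units.val hu2).symm
      have hab : a * b = 1 := hEinj (by rw [map_mul, ha, hb, map_one, Units.mul_inv])
      exact ⟨⟨a, b, hab, by rw [mul_comm, hab]⟩, Subtype.ext (Units.ext ha)⟩
  have hrange : Nat.card φ.range =
      Nat.card {f : AdjoinRoot m // f * θ f = 1 ∧ AdjoinRoot.root m ∣ f - 1} := by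
    refine Nat.card_congr (Equiv.ofBijective (fun u => ⟨((u : (AdjoinRoot m)ˣ) : AdjoinRoot m), ?_, ?_⟩) ⟨?_, ?_⟩)
    · obtain ⟨_, h, rfl⟩ := u
      have h1 : φ h * Θ (φ h) = 1 := by
        rw [hφ, map_mul, map_inv, hΘΘ]; group
      exact congrArg Units.val h1
    · obtain ⟨_, h, rfl⟩ := u
      obtain ⟨c, hc⟩ := hdvd (h : AdjoinRoot m)
      refine ⟨c * ((Θ h)⁻¹ : (AdjoinRoot m)ˣ), ?_⟩
      rw [← mul_assoc, ← hc, ← hΘ, sub_mul, Units.mul_inv]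
      rfl
    · intro u v huv
      exact Subtype.ext (Units.ext (Subtype.ext_iff.1 huv))
    · rintro ⟨f, hf1, hf2⟩
      obtain ⟨h, hh⟩ := exists_unit_of_norm_one θ hθθ _ ht h2u f hf1 hf2
      refine ⟨⟨φ h, h, rfl⟩, Subtype.ext ?_⟩
      change ((h * (Θ h)⁻¹ : (AdjoinRoot m)ˣ) : AdjoinRoot m) = f
      rw [Units.val_mul, Units.mul_inv_eq_iff_eq_mul]
      exact hh.symm
  rw [← hker, ← hrange, Subgroup.card_eq_card_quotient_mul_card_subgroup φ.ker,
    Nat.card_congr (QuotientGroup.quotientKerEquivRange φ).toEquiv]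

/-! ### The centralizer in the commutant algebra -/

section Centralizer

variable {k : Type*} [Field k] {N : ℕ} {J J' x : Matrix (Fin N) (Fin N) k}

/-- The adjoint of `p(x)` with respect to `J` is `p(-x)`. -/
theorem mul_aeval_eq (hx : xᵀ * J + J * x = 0) (p : k[X]) :
    J * aeval x p = (aeval x (p.comp (-X)))ᵀ * J := by
  rw [aeval_comp, map_neg, aeval_X]
  induction p using Polynomial.induction_on with
  | C a =>
    rw [aeval_C, aeval_C, Matrix.algebraMap_eq_diagonal, Matrix.diagonal_transpose,
      ← Matrix.algebraMap_eq_diagonal, Algebra.commutes]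
  | add p q hp hq => rw [map_add, map_add, mul_add, hp, hq, transpose_add, add_mul]
  | monomial n a h =>
    rw [pow_succ, ← mul_assoc, map_mul _ (C a * X ^ n), map_mul _ (C a * X ^ n), aeval_X, aeval_X,
      ← mul_assoc, h, transpose_mul,
      mul_assoc, show J * x = (-x)ᵀ * J by
        rw [transpose_neg, neg_mul]; exact eq_neg_of_add_eq_zero_right hx, ← mul_assoc]
    congr 1
    rw [← transpose_mul, ← transpose_mul]
    congr 1
    have : Commute (aeval (-x) (X : k[X])) (aeval (-x) (C a * X ^ n)) := by
      rw [Commute, SemiconjBy, ← map_mul, ← map_mul, mul_comm]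
    rw [aeval_X] at this
    exact this.eq

/-- As `-x` is the adjoint of `x`, the two have the same minimal polynomial, so `m(-t) = ± m(t)`. -/
theorem minpoly_comp_neg_X (hJJ : J * J' = 1) (hx : xᵀ * J + J * x = 0) :
    (minpoly k x).comp (-X) = (-1) ^ (minpoly k x).natDegree * minpoly k x := by
  have hmon : (minpoly k x).Monic := minpoly.monic (Matrix.isIntegral x)
  have h0 := mul_aeval_eq hx (minpoly k x)
  rw [minpoly.aeval, mul_zero] at h0
  have h1 : aeval x ((minpoly k x).comp (-X)) = 0 := by
    have := congrArg (fun M => (M * J')ᵀ) h0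
    simpa [mul_assoc, hJJ] using this.symm
  have hmon' := hmon.neg_one_pow_natDegree_mul_comp_neg_X
  have h3 := eq_of_monic_of_dvd_of_natDegree_le hmon hmon'
    (dvd_mul_of_dvd_right (minpoly.dvd k x h1) _) (by
      rw [natDegree_eq_of_degree_eq (q := minpoly k x)]
      rw [← C_1, ← C_neg, ← C_pow, degree_C_mul (pow_ne_zero _ (neg_ne_zero.2 one_ne_zero)),
        degree_comp_neg_X])
  nth_rewrite 3 [← h3]
  rw [← mul_assoc, ← mul_pow]
  simp

theorem det_eq_zero_iff (hdeg : (minpoly k x).natDegree = N) : x.det = 0 ↔ X ∣ minpoly k x := by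
  have h : x.charpoly = minpoly k x := eq_of_monic_of_dvd_of_natDegree_le
    (minpoly.monic (Matrix.isIntegral x)) (Matrix.charpoly_monic x)
    (Matrix.minpoly_dvd_charpoly x) (by rw [hdeg, Matrix.charpoly_natDegree_eq_dim, Fintype.card_fin])
  rw [Matrix.det_eq_sign_charpoly_coeff, h, X_dvd_iff, mul_eq_zero]
  simp

/-- Under `k[t]/(m) ≃ k[x]`, the centralizer of `x` in `G₁` becomes
`{f | f * θ f = 1, det f(x) = 1}`. It contains `U = {f | f * θ f = 1, t ∣ f - 1}`, as an element
`h / θ h` has determinant `1`. If `t ∤ m` then `t` is a unit and the two coincide. If `t ∣ m` then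
`f * θ f = 1` forces `f(0) = ±1`, so `f ∈ U` or `-f ∈ U`; the second possibility has determinant
`(-1) ^ N`, so it doubles the count for `N` even and is excluded for `N` odd. -/
theorem card_centralizer [Fintype k] (h2 : (2 : k) ≠ 0) (hJJ : J * J' = 1) (hJJ' : J' * J = 1)
    (hx : xᵀ * J + J * x = 0) {m : k[X]} (hm : m = minpoly k x) (hdeg : m.natDegree = N)
    (θ : AdjoinRoot m →+* AdjoinRoot m)
    (hθ : ∀ p, θ (AdjoinRoot.mk m p) = AdjoinRoot.mk m (p.comp (-X))) :
    Nat.card {g : Matrix (Fin N) (Fin N) k // gᵀ * J * g = J ∧ g.det = 1 ∧ g * x = x * g} =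
      2 ^ (if Even N ∧ x.det = 0 then 1 else 0) *
        Nat.card {f : AdjoinRoot m // f * θ f = 1 ∧ AdjoinRoot.root m ∣ f - 1} := by
  have hmon : m.Monic := hm ▸ minpoly.monic (Matrix.isIntegral x)
  have hfin : Finite (AdjoinRoot m) := (card_adjoinRoot m hmon.ne_zero).1
  let Φ : AdjoinRoot m →+* Matrix (Fin N) (Fin N) k := Ideal.Quotient.lift _
    (aeval x : k[X] →ₐ[k] _).toRingHom (by
      intro a ha
      obtain ⟨c, rfl⟩ := Ideal.mem_span_singleton.1 ha
      change aeval x (m * c) = 0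
      rw [map_mul, hm, minpoly.aeval, zero_mul])
  have hΦ : ∀ p, Φ (AdjoinRoot.mk m p) = aeval x p := fun p => rfl
  have hΦinj : Function.Injective Φ := by
    rw [injective_iff_map_eq_zero]
    intro a ha
    obtain ⟨p, rfl⟩ := AdjoinRoot.mk_surjective a
    rw [hΦ] at ha
    rw [AdjoinRoot.mk_eq_zero]
    exact hm ▸ minpoly.dvd k x ha
  have hθθ : ∀ a, θ (θ a) = a := by
    intro a
    obtain ⟨p, rfl⟩ := AdjoinRoot.mk_surjective a
    rw [hθ, hθ, comp_neg_X_comp_neg_X]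
  have ht : θ (AdjoinRoot.root m) = - AdjoinRoot.root m := by
    rw [← AdjoinRoot.mk_X, hθ, X_comp, map_neg]
  have htwo : (2 : AdjoinRoot m) = AdjoinRoot.mk m (C 2) := by
    rw [map_ofNat C, map_ofNat]
  have h2u : IsUnit (2 : AdjoinRoot m) := by
    rw [htwo]
    exact ((isUnit_C.2 (isUnit_iff_ne_zero.2 h2)).map _)
  have hJΦ : ∀ a, J * Φ a = (Φ (θ a))ᵀ * J := by
    intro a
    obtain ⟨p, rfl⟩ := AdjoinRoot.mk_surjective a
    rw [hθ, hΦ, hΦ]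
    exact mul_aeval_eq hx p
  have hJdet : J.det ≠ 0 := by
    intro h
    have := congrArg Matrix.det hJJ
    rw [det_mul, h, zero_mul, det_one] at this
    exact zero_ne_one this
  have hdetθ : ∀ a, (Φ (θ a)).det = (Φ a).det := by
    intro a
    have := congrArg Matrix.det (hJΦ a)
    rw [det_mul, det_mul, det_transpose, mul_comm] at this
    exact (mul_right_cancel₀ hJdet this).symm
  have hdet1 : ∀ f, f * θ f = 1 → AdjoinRoot.root m ∣ f - 1 → (Φ f).det = 1 := by
    intro f hf1 hf2
    obtain ⟨h, hh⟩ := exists_unit_of_norm_one θ hθθ _ ht h2u f hf1 hf2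
    have h1 := congrArg (fun a => (Φ a).det) hh
    simp only [map_mul, det_mul, hdetθ] at h1
    have hu : IsUnit (Φ h).det := (Matrix.isUnit_iff_isUnit_det _).1 (h.isUnit.map Φ)
    exact mul_right_cancel₀ hu.ne_zero (h1.trans (one_mul _).symm)
  have hneg : ∀ f, (Φ (-f)).det = (-1) ^ N * (Φ f).det := by
    intro f
    rw [map_neg, det_neg, Fintype.card_fin]
  -- the centralizer in terms of the commutant algebra
  have e : Nat.card {g : Matrix (Fin N) (Fin N) k // gᵀ * J * g = J ∧ g.det = 1 ∧ g * x = x * g} =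
      ({f : AdjoinRoot m | f * θ f = 1 ∧ (Φ f).det = 1} : Set _).ncard := by
    have hiff : ∀ f, (Φ f)ᵀ * J * Φ f = J ↔ f * θ f = 1 := by
      intro f
      have h1 := hJΦ (θ f)
      rw [hθθ] at h1
      rw [← h1, mul_assoc, ← map_mul, mul_comm f]
      constructor
      · intro h
        apply hΦinj
        rw [map_one, ← one_mul (Φ _), ← hJJ', mul_assoc, h]
      · intro h
        rw [h, map_one, mul_one]
    symm
    refine Nat.card_congr (Equiv.ofBijective (fun f => ⟨Φ f, (hiff _).2 f.2.1, f.2.2, ?_⟩) ⟨?_, ?_⟩)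
    · have : Φ (AdjoinRoot.root m) = x := by
        rw [← AdjoinRoot.mk_X, hΦ, aeval_X]
      have h3 : Φ f * Φ (AdjoinRoot.root m) = Φ (AdjoinRoot.root m) * Φ f := by
        rw [← map_mul, ← map_mul, mul_comm]
      rwa [this] at h3
    · intro f g hfg
      exact Subtype.ext (hΦinj (Subtype.ext_iff.1 hfg))
    · rintro ⟨g, hg1, hg2, hg3⟩
      obtain ⟨p, rfl⟩ := exists_aeval_of_commute x (hm ▸ hdeg) g hg3
      exact ⟨⟨AdjoinRoot.mk m p, (hiff _).1 hg1, hg2⟩, rfl⟩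
  change _ = _ * ({f : AdjoinRoot m | f * θ f = 1 ∧ AdjoinRoot.root m ∣ f - 1} : Set _).ncard
  rw [e, det_eq_zero_iff (hm ▸ hdeg), ← hm]
  -- the constant term of `f * θ f = 1` reads `f(0)² = 1` when `t ∣ m`
  have hpm : X ∣ m → ∀ f, f * θ f = 1 → AdjoinRoot.root m ∣ f - 1 ∨ AdjoinRoot.root m ∣ -f - 1 := by
    intro hX f hf
    obtain ⟨p, rfl⟩ := AdjoinRoot.mk_surjective f
    rw [hθ, ← map_mul, ← map_one (AdjoinRoot.mk m), AdjoinRoot.mk_eq_mk] at hf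
    have h1 := X_dvd_iff.1 (hX.trans hf)
    rw [coeff_sub, mul_coeff_zero, coeff_comp_neg_X', pow_zero, one_mul, coeff_one_zero] at h1
    have h3 : (p.coeff 0 - 1) * (p.coeff 0 + 1) = 0 := by linear_combination h1
    rw [← AdjoinRoot.mk_X, ← map_one (AdjoinRoot.mk m), ← map_neg, ← map_sub, ← map_sub]
    refine (mul_eq_zero.1 h3).imp (fun h => map_dvd _ (X_dvd_iff.2 ?_))
      (fun h => map_dvd _ (X_dvd_iff.2 ?_))
    · rw [coeff_sub, coeff_one_zero, h]
    · rw [coeff_sub, coeff_neg, coeff_one_zero]; linear_combination -h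
  by_cases hX : X ∣ m
  · rcases Nat.even_or_odd N with hN | hN
    · rw [if_pos ⟨hN, hX⟩, pow_one]
      have hset : {f : AdjoinRoot m | f * θ f = 1 ∧ (Φ f).det = 1} =
          {f : AdjoinRoot m | f * θ f = 1 ∧ AdjoinRoot.root m ∣ f - 1} ∪
          Neg.neg '' {f : AdjoinRoot m | f * θ f = 1 ∧ AdjoinRoot.root m ∣ f - 1} := by
        ext f
        simp only [Set.image_neg_eq_neg, Set.mem_union, Set.mem_neg, Set.mem_ofPred_eq]
        have hff : -f * θ (-f) = f * θ f := by rw [map_neg]; ring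
        rw [hff]
        constructor
        · rintro ⟨h1, -⟩
          exact (hpm hX f h1).imp (fun h => ⟨h1, h⟩) (fun h => ⟨h1, h⟩)
        · rintro (⟨h1, h3⟩ | ⟨h1, h3⟩)
          · exact ⟨h1, hdet1 f h1 h3⟩
          · have := hdet1 (-f) (hff.trans h1) h3
            rw [hneg, hN.neg_one_pow, one_mul] at this
            exact ⟨h1, this⟩
      rw [hset, Set.ncard_union_eq, Set.ncard_image_of_injective _ neg_injective, two_mul]
      -- `f ≡ 1` and `f ≡ -1` modulo `t` would make `t` divide `2`, but `t` is not a unit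
      rw [Set.disjoint_left]
      rintro f ⟨-, hf⟩ ⟨f', ⟨-, hf'⟩, rfl⟩
      have h3 : AdjoinRoot.root m ∣ 2 := by
        have := dvd_neg.2 (dvd_add hf hf')
        rwa [show -(-f' - 1 + (f' - 1)) = (2 : AdjoinRoot m) by ring] at this
      have h4 := isUnit_of_dvd_unit h3 h2u
      rw [← AdjoinRoot.mk_X, isUnit_mk_iff] at h4
      exact not_isUnit_X (h4.isUnit_of_dvd' dvd_rfl hX)
    · rw [if_neg (fun h => Nat.not_even_iff_odd.2 hN h.1), pow_zero, one_mul]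
      congr 1
      ext f
      constructor
      · rintro ⟨h1, h3⟩
        refine ⟨h1, (hpm hX f h1).resolve_right fun h => ?_⟩
        have := hdet1 (-f) (by rw [map_neg, neg_mul_neg, h1]) h
        rw [hneg, hN.neg_one_pow, h3] at this
        exact h2 (by linear_combination -this)
      · rintro ⟨h1, h3⟩
        exact ⟨h1, hdet1 f h1 h3⟩
  · rw [if_neg (fun h => hX h.2), pow_zero, one_mul]
    congr 1
    ext f
    have hu : IsUnit (AdjoinRoot.root m) := by
      rw [← AdjoinRoot.mk_X, isUnit_mk_iff]
      exact (irreducible_X.coprime_iff_not_dvd).2 hX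
    exact ⟨fun h => ⟨h.1, hu.dvd⟩, fun h => ⟨h.1, hdet1 f h.1 h.2⟩⟩

end Centralizer

/-! ### Factorization of `p(t²)` -/

section Tilde

variable {k : Type*} [Field k]

/-- The polynomial `(-1) ^ deg f * f(-t)`. It is the monic associate of `f(-t)` when `f` is monic. -/
noncomputable def tilde (f : k[X]) : k[X] := (-1) ^ f.natDegree * f.comp (-X)

theorem isUnit_neg_one_pow (n : ℕ) : IsUnit ((-1 : k[X]) ^ n) := (isUnit_one.neg).pow n

theorem neg_one_pow_mul_self (n : ℕ) : (-1 : k[X]) ^ n * (-1) ^ n = 1 := by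
  rw [← mul_pow]; simp

theorem neg_one_pow_comp (n : ℕ) (f : k[X]) : ((-1 : k[X]) ^ n).comp f = (-1) ^ n := by
  simp

theorem natDegree_tilde (f : k[X]) : (tilde f).natDegree = f.natDegree := by
  refine natDegree_eq_of_degree_eq ?_
  rw [tilde, ← C_1, ← C_neg, ← C_pow, degree_C_mul (pow_ne_zero _ (neg_ne_zero.2 one_ne_zero)),
    degree_comp_neg_X]

theorem monic_tilde {f : k[X]} (hf : f.Monic) : (tilde f).Monic :=
  hf.neg_one_pow_natDegree_mul_comp_neg_X

theorem tilde_tilde (f : k[X]) : tilde (tilde f) = f := by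
  rw [tilde, natDegree_tilde]
  conv_lhs => rw [tilde]
  rw [mul_comp, neg_one_pow_comp, comp_neg_X_comp_neg_X, ← mul_assoc, neg_one_pow_mul_self, one_mul]

theorem tilde_pow (f : k[X]) (n : ℕ) : tilde (f ^ n) = tilde f ^ n := by
  rw [tilde, tilde, natDegree_pow, mul_pow, pow_comp, ← pow_mul, mul_comm n]

theorem tilde_dvd_tilde {a b : k[X]} (h : a ∣ b) : tilde a ∣ tilde b := by
  obtain ⟨c, rfl⟩ := h
  rw [tilde, tilde, (isUnit_neg_one_pow _).mul_left_dvd, (isUnit_neg_one_pow _).dvd_mul_left,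
    mul_comp]
  exact dvd_mul_right _ _

theorem tilde_eq_self_of_expand (p : k[X]) : tilde (expand k 2 p) = expand k 2 p := by
  rw [tilde, expand_two_comp_neg_X, natDegree_expand, pow_mul', neg_one_sq, one_pow, one_mul]

theorem irreducible_tilde {f : k[X]} (hf : Irreducible f) : Irreducible (tilde f) := by
  refine ⟨fun h => hf.not_isUnit ?_, fun a b hab => ?_⟩
  · rw [isUnit_iff_degree_eq_zero] at h ⊢
    have h0 : tilde f ≠ 0 := fun h0 => by rw [h0, degree_zero] at h; exact absurd h (by simp)
    rw [← h, degree_eq_natDegree h0, natDegree_tilde, degree_eq_natDegree hf.ne_zero]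
  · have h : f = ((-1) ^ (tilde f).natDegree * a.comp (-X)) * b.comp (-X) := by
      rw [← tilde_tilde f]
      conv_lhs => rw [tilde]
      rw [hab, mul_comp, mul_assoc, tilde_tilde, ← hab]
    have key : ∀ c : k[X], IsUnit (c.comp (-X)) → IsUnit c := by
      intro c hc
      have := hc.map (compRingHom (-X))
      rwa [coe_compRingHom_apply, comp_neg_X_comp_neg_X] at this
    rcases hf.isUnit_or_isUnit h with h1 | h1
    · exact Or.inl (key _ (isUnit_of_mul_isUnit_right h1))
    · exact Or.inr (key _ h1)

/-- Two monic irreducible polynomials, one dividing the other, coincide. -/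
theorem eq_of_irreducible_dvd {p r : k[X]} (hp : p.Monic) (hpi : Irreducible p) (hr : r.Monic)
    (hri : Irreducible r) (h : p ∣ r) : p = r :=
  eq_of_monic_of_associated hp hr (hpi.associated_of_dvd hri h)

theorem eq_of_dvd_expand {p r π : k[X]} (hp : p.Monic) (hpi : Irreducible p) (hr : r.Monic)
    (hri : Irreducible r) (hπ : Irreducible π) (h1 : π ∣ expand k 2 p) (h3 : π ∣ expand k 2 r) :
    p = r := by
  by_contra hne
  have hc : IsCoprime p r := (hpi.coprime_iff_not_dvd).2 fun h =>
    hne (eq_of_irreducible_dvd hp hpi hr hri h)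
  exact hπ.not_isUnit ((hc.map (expand k 2 : k[X] →ₐ[k] k[X]).toRingHom).isUnit_of_dvd' h1 h3)

/-- An irreducible divisor of `g(t²)` divides `p(t²)` for some irreducible divisor `p` of `g`. -/
theorem exists_dvd_expand {g π : k[X]} (hg : g ≠ 0) (hπ : Irreducible π)
    (h : π ∣ expand k 2 g) : ∃ p ∈ irrDivisors g, π ∣ expand k 2 p := by
  have h1 : π ∣ expand k 2 (UniqueFactorizationMonoid.normalizedFactors g).prod := by
    obtain ⟨c, hc⟩ := (UniqueFactorizationMonoid.prod_normalizedFactors hg).symm.dvd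
    rw [hc, map_mul]
    exact dvd_mul_of_dvd_left h _
  rw [map_multiset_prod] at h1
  obtain ⟨p, hp, hπq⟩ := (Irreducible.prime hπ).exists_mem_multiset_map_dvd h1
  exact ⟨p, Multiset.mem_toFinset.2 hp, hπq⟩

/-- If `p ≠ t` is irreducible and `p(t²)` is reducible, then `p(t²) = τ(t) * τ̃(t)` with `τ ≠ τ̃` monic
irreducible of degree `deg p`. Indeed an irreducible factor `τ` of `p(t²)` is neither even (it would
be all of `p(t²)`) nor odd (it would be `t`), so that `τ` and `τ̃` are coprime with even product. -/
theorem exists_factor (h2 : (2 : k) ≠ 0) {p : k[X]} (hp : p.Monic) (hpi : Irreducible p)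
    (hpX : p ≠ X) (hni : ¬ Irreducible (expand k 2 p)) :
    ∃ τ : k[X], τ.Monic ∧ Irreducible τ ∧ tilde τ ≠ τ ∧ τ * tilde τ = expand k 2 p ∧
      τ.natDegree = p.natDegree := by
  have hpe : (expand k 2 p).Monic := (monic_expand_iff two_pos).2 hp
  have hnu : ¬ IsUnit (expand k 2 p) := by
    intro h
    have h1 := natDegree_eq_zero_of_isUnit h
    rw [natDegree_expand] at h1
    exact hpi.natDegree_pos.ne' (by omega)
  obtain ⟨τ, hτm, hτi, hτd⟩ := exists_monic_irreducible_factor _ hnu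
  -- an even polynomial dividing `expand p` and having positive degree is `expand p` itself
  have key : ∀ f : k[X], f.Monic → ¬ IsUnit f → f.comp (-X) = f → f ∣ expand k 2 p →
      f = expand k 2 p := by
    intro f hfm hfu hfe hfd
    obtain ⟨r, rfl⟩ := exists_expand_of_even h2 hfe
    have hrm : r.Monic := (monic_expand_iff two_pos).1 hfm
    rw [expand_dvd_expand_iff h2 hrm.ne_zero] at hfd
    rcases (hpi.dvd_iff).1 hfd with h | h
    · exact absurd (h.map (expand k 2)) hfu
    · rw [eq_of_monic_of_associated hp hrm h]
  have hne : tilde τ ≠ τ := by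
    intro h
    rw [tilde] at h
    rcases Nat.even_or_odd τ.natDegree with hd | hd
    · rw [hd.neg_one_pow, one_mul] at h
      exact hni (key τ hτm hτi.not_isUnit h hτd ▸ hτi)
    · rw [hd.neg_one_pow, neg_one_mul, neg_eq_iff_eq_neg] at h
      have hX := X_dvd_of_odd h2 h
      have hX' : X ∣ p := by
        rw [X_dvd_iff]
        have := X_dvd_iff.1 (hX.trans hτd)
        rwa [coeff_expand two_pos, if_pos (dvd_zero _), Nat.zero_div] at this
      exact hpX (eq_of_irreducible_dvd monic_X irreducible_X hp hpi hX').symm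
  have hti := irreducible_tilde hτi
  have htm := monic_tilde hτm
  have hcop : IsCoprime τ (tilde τ) := (hτi.coprime_iff_not_dvd).2 fun h =>
    hne (eq_of_irreducible_dvd hτm hτi htm hti h).symm
  have hdvd : τ * tilde τ ∣ expand k 2 p :=
    hcop.mul_dvd hτd (tilde_eq_self_of_expand p ▸ tilde_dvd_tilde hτd)
  have heq : τ * tilde τ = expand k 2 p := by
    refine key _ (hτm.mul htm) (fun h => hτi.not_isUnit (isUnit_of_mul_isUnit_left h)) ?_ hdvd
    rw [tilde, mul_comp, mul_comp, neg_one_pow_comp, comp_neg_X_comp_neg_X]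
    ring
  refine ⟨τ, hτm, hτi, hne, heq, ?_⟩
  have := congrArg natDegree heq
  rw [hτm.natDegree_mul htm, natDegree_tilde, natDegree_expand] at this
  omega

end Tilde

/-! ### Counting by degree and multiplicity -/

section Count

variable {k : Type*} [Field k]

/-- The irreducible divisors of `g(t²)` are grouped according to the irreducible divisors of `g`. -/
theorem irrDivisors_expand {g : k[X]} (hg : g ≠ 0) :
    irrDivisors (expand k 2 g) = (irrDivisors g).biUnion fun p => irrDivisors (expand k 2 p) := by
  have hE : ∀ p : k[X], p ≠ 0 → expand k 2 p ≠ 0 := fun p hp => (expand_ne_zero two_pos).2 hp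
  ext π
  rw [Finset.mem_biUnion, mem_irrDivisors (hE g hg)]
  constructor
  · rintro ⟨h1, h3, h4⟩
    obtain ⟨p, hp, hπp⟩ := exists_dvd_expand hg h3 h4
    exact ⟨p, hp, (mem_irrDivisors (hE p ((mem_irrDivisors hg).1 hp).1.ne_zero)).2 ⟨h1, h3, hπp⟩⟩
  · rintro ⟨p, hp, hπ⟩
    have hp' := (mem_irrDivisors hg).1 hp
    have hπ' := (mem_irrDivisors (hE p hp'.1.ne_zero)).1 hπ
    obtain ⟨c, hc⟩ := hp'.2.2
    refine ⟨hπ'.1, hπ'.2.1, hπ'.2.2.trans ?_⟩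
    rw [hc, map_mul]
    exact dvd_mul_right _ _

theorem disjoint_irrDivisors_expand {g : k[X]} (hg : g ≠ 0) :
    (irrDivisors g : Set k[X]).PairwiseDisjoint fun p => irrDivisors (expand k 2 p) := by
  intro p hp r hr hpr
  rw [Function.onFun, Finset.disjoint_left]
  intro π h1 h3
  have hp' := (mem_irrDivisors hg).1 hp
  have hr' := (mem_irrDivisors hg).1 hr
  have h1' := (mem_irrDivisors ((expand_ne_zero two_pos).2 hp'.1.ne_zero)).1 h1
  have h3' := (mem_irrDivisors ((expand_ne_zero two_pos).2 hr'.1.ne_zero)).1 h3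
  exact hpr (eq_of_dvd_expand hp'.1 hp'.2.1 hr'.1 hr'.2.1 h1'.2.1 h1'.2.2 h3'.2.2)

theorem irrDivisors_of_irreducible {f : k[X]} (hm : f.Monic) (hf : Irreducible f) :
    irrDivisors f = {f} := by
  ext π
  rw [mem_irrDivisors hm.ne_zero, Finset.mem_singleton]
  constructor
  · rintro ⟨h1, h3, h4⟩
    exact eq_of_irreducible_dvd h1 h3 hm hf h4
  · rintro rfl
    exact ⟨hm, hf, dvd_rfl⟩

theorem irrDivisors_mul {f g : k[X]} (hf : f ≠ 0) (hg : g ≠ 0) :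
    irrDivisors (f * g) = irrDivisors f ∪ irrDivisors g := by
  ext π
  rw [Finset.mem_union, mem_irrDivisors (mul_ne_zero hf hg), mem_irrDivisors hf,
    mem_irrDivisors hg]
  constructor
  · rintro ⟨h1, h3, h4⟩
    exact ((Irreducible.prime h3).dvd_or_dvd h4).imp (fun h => ⟨h1, h3, h⟩) (fun h => ⟨h1, h3, h⟩)
  · rintro (⟨h1, h3, h4⟩ | ⟨h1, h3, h4⟩)
    · exact ⟨h1, h3, h4.mul_right _⟩
    · exact ⟨h1, h3, h4.mul_left _⟩

theorem not_irreducible_expand_X : ¬ Irreducible (expand k 2 X) := by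
  rw [expand_X]
  intro h
  exact (h.isUnit_or_isUnit (sq X)).elim not_isUnit_X not_isUnit_X

/-- The contribution of an irreducible divisor `p` of `g` to the order of the centralizer:
`1 + q ^ (-d)` if `p(t²)` is irreducible (`p` is inert, `d = deg p`), `1` if `p = t` (ramified), and
`1 - q ^ (-d)` otherwise (split). -/
noncomputable def localFactor (q : ℚ) (p : k[X]) : ℚ :=
  if Irreducible (expand k 2 p) then 1 + (q ^ p.natDegree)⁻¹
  else if p = X then 1 else 1 - (q ^ p.natDegree)⁻¹

/-- The local factor at `p` is the quotient of the Euler factors of the divisors of `p(t²)` by that of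
`p`: it is `(1 - q ^ (-2d)) / (1 - q ^ (-d))` in the inert case, `1` in the ramified case and
`(1 - q ^ (-d))² / (1 - q ^ (-d))` in the split case. -/
theorem prod_irrDivisors_expand (h2 : (2 : k) ≠ 0) (q : ℚ) {g : k[X]} (hg : g ≠ 0) :
    ∏ π ∈ irrDivisors (expand k 2 g), (1 - (q ^ π.natDegree)⁻¹) =
      (∏ p ∈ irrDivisors g, localFactor q p) *
        ∏ p ∈ irrDivisors g, (1 - (q ^ p.natDegree)⁻¹) := by
  rw [irrDivisors_expand hg, Finset.prod_biUnion (disjoint_irrDivisors_expand hg),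
    ← Finset.prod_mul_distrib]
  refine Finset.prod_congr rfl fun p hp => ?_
  obtain ⟨hpm, hpi, -⟩ := (mem_irrDivisors hg).1 hp
  have hpe : (expand k 2 p).Monic := (monic_expand_iff two_pos).2 hpm
  rw [localFactor]
  split_ifs with h1 h3
  · rw [irrDivisors_of_irreducible hpe h1, Finset.prod_singleton, natDegree_expand, pow_mul, sq,
      mul_inv]
    ring
  · subst h3
    rw [expand_X, sq, irrDivisors_mul X_ne_zero X_ne_zero, Finset.union_self,
      irrDivisors_of_irreducible monic_X irreducible_X, Finset.prod_singleton, one_mul]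
  · obtain ⟨τ, hτm, hτi, hne, heq, hdeg⟩ := exists_factor h2 hpm hpi h3 h1
    rw [← heq, irrDivisors_mul hτm.ne_zero (monic_tilde hτm).ne_zero,
      irrDivisors_of_irreducible hτm hτi,
      irrDivisors_of_irreducible (monic_tilde hτm) (irreducible_tilde hτi),
      Finset.singleton_union, Finset.prod_pair hne.symm, natDegree_tilde, hdeg]

/-- A product whose factors depend only on a degree `dg`, regrouped by `dg` and a multiplicity `mu`,
both with values in `[1, N]`. -/
theorem prod_eq_prod_prod_pow {α : Type*} (s : Finset α) (N : ℕ) (dg mu : α → ℕ)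
    (hd : ∀ a ∈ s, dg a ∈ Finset.Icc 1 N) (he : ∀ a ∈ s, mu a ∈ Finset.Icc 1 N) (c : ℕ → ℚ) :
    ∏ a ∈ s, c (dg a) = ∏ d ∈ Finset.Icc 1 N, ∏ e ∈ Finset.Icc 1 N,
      c d ^ (s.filter fun a => dg a = d ∧ mu a = e).card := by
  rw [← Finset.prod_fiberwise_of_maps_to hd]
  refine Finset.prod_congr rfl fun d _ => ?_
  rw [← Finset.prod_fiberwise_of_maps_to (s := s.filter fun a => dg a = d) (g := mu)
    (t := Finset.Icc 1 N) (fun a ha => he a (Finset.mem_filter.1 ha).1)]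
  refine Finset.prod_congr rfl fun e _ => ?_
  rw [Finset.filter_filter]
  refine Finset.prod_eq_pow_card fun a ha => ?_
  rw [(Finset.mem_filter.1 ha).2.1]

/-- The multiplicity and the degree of an irreducible divisor of `m` lie in `[1, deg m]`. -/
theorem multiplicity_mem {m π : k[X]} (hm : m ≠ 0) (hπ : Irreducible π) (hd : π ∣ m) :
    multiplicity π m ∈ Finset.Icc 1 m.natDegree ∧ π.natDegree ∈ Finset.Icc 1 m.natDegree := by
  have h1 : π.natDegree ≤ m.natDegree := natDegree_le_of_dvd hd hm
  have h3 := natDegree_le_of_dvd (pow_multiplicity_dvd π m) hm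
  have hpos := hπ.natDegree_pos
  rw [natDegree_pow] at h3
  have hfin : FiniteMultiplicity π m := FiniteMultiplicity.of_not_isUnit hπ.not_isUnit hm
  rw [Finset.mem_Icc, Finset.mem_Icc]
  refine ⟨⟨?_, ?_⟩, hpos, h1⟩
  · exact hfin.le_multiplicity_of_pow_dvd (by rwa [pow_one])
  · exact (Nat.le_mul_of_pos_right _ hpos).trans h3

theorem multiplicity_tilde {m τ : k[X]} (hm : m ≠ 0) (hτ : Irreducible τ) (h : tilde m = m) :
    multiplicity (tilde τ) m = multiplicity τ m := by
  have hfin : FiniteMultiplicity τ m := FiniteMultiplicity.of_not_isUnit hτ.not_isUnit hm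
  have hfin' : FiniteMultiplicity (tilde τ) m :=
    FiniteMultiplicity.of_not_isUnit (irreducible_tilde hτ).not_isUnit hm
  rw [hfin'.multiplicity_eq_iff]
  constructor
  · rw [← tilde_pow, ← h]
    exact tilde_dvd_tilde (h.symm ▸ pow_multiplicity_dvd τ m)
  · intro h1
    rw [← tilde_pow] at h1
    have h3 := tilde_dvd_tilde h1
    rw [tilde_tilde, h] at h3
    exact hfin.not_pow_dvd_of_multiplicity_lt (Nat.lt_succ_self _) h3

/-- The product of the local factors in terms of `Scount` and `Tcount`. Sending `p` to `p(t²)` is a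
bijection from the inert divisors of `g` to the even irreducible divisors of `m`, and sending `p` to
`{τ, τ̃}`, where `p(t²) = τ * τ̃`, is a bijection from the split divisors of `g` to the unordered pairs
counted by `Tcount`. Both are compatible with degrees and multiplicities in `m`. -/
theorem prod_localFactor (h2 : (2 : k) ≠ 0) (q : ℚ) {m g : k[X]} (hm : m.Monic) (hg : g.Monic)
    (ht : tilde m = m)
    (hfac : ∀ π : k[X], Irreducible π → (π ∣ m ↔ π ∣ expand k 2 g)) :
    ∏ p ∈ irrDivisors g, localFactor q p =
      ∏ d ∈ Finset.Icc 1 m.natDegree, ∏ e ∈ Finset.Icc 1 m.natDegree,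
        (1 + (q ^ d)⁻¹) ^ Scount k m d e * (1 - (q ^ d)⁻¹) ^ Tcount k m d e := by
  have hm0 := hm.ne_zero
  have hirr : ∀ p ∈ irrDivisors g, p.Monic ∧ Irreducible p := fun p hp =>
    ⟨((mem_irrDivisors hg.ne_zero).1 hp).1, ((mem_irrDivisors hg.ne_zero).1 hp).2.1⟩
  have hdvd : ∀ p ∈ irrDivisors g, ∀ π : k[X], Irreducible π → π ∣ expand k 2 p → π ∣ m := by
    intro p hp π hπ h
    obtain ⟨c, hc⟩ := ((mem_irrDivisors hg.ne_zero).1 hp).2.2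
    rw [hfac π hπ, hc, map_mul]
    exact h.mul_right _
  have hmult : ∀ (π : k[X]) (e : ℕ), Irreducible π →
      (multiplicity π m = e ↔ π ^ e ∣ m ∧ ¬ π ^ (e + 1) ∣ m) := fun π e hπ =>
    (FiniteMultiplicity.of_not_isUnit hπ.not_isUnit hm0).multiplicity_eq_iff
  let A := (irrDivisors g).filter fun p => Irreducible (expand k 2 p)
  let B := ((irrDivisors g).filter fun p => ¬ Irreducible (expand k 2 p)).filter fun p => ¬ p = X
  have hsplit : ∏ p ∈ irrDivisors g, localFactor q p =
      (∏ p ∈ A, (1 + (q ^ p.natDegree)⁻¹)) * ∏ p ∈ B, (1 - (q ^ p.natDegree)⁻¹) := by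
    simp only [localFactor]
    rw [Finset.prod_ite, Finset.prod_ite, Finset.prod_const_one, one_mul]
  have hA : ∀ p ∈ A, p ∈ irrDivisors g ∧ Irreducible (expand k 2 p) := fun p hp =>
    Finset.mem_filter.1 hp
  have hB : ∀ p ∈ B, p ∈ irrDivisors g ∧ ∃ τ : k[X], τ.Monic ∧ Irreducible τ ∧ tilde τ ≠ τ ∧
      τ * tilde τ = expand k 2 p ∧ τ.natDegree = p.natDegree := by
    intro p hp
    obtain ⟨hp1, hpX⟩ := Finset.mem_filter.1 hp
    obtain ⟨hp1, hni⟩ := Finset.mem_filter.1 hp1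
    exact ⟨hp1, exists_factor h2 (hirr p hp1).1 (hirr p hp1).2 hpX hni⟩
  choose! hBg τ hτm hτi hτne hτe hτd using hB
  have hτdvd : ∀ p ∈ B, τ p ∣ m := fun p hp =>
    hdvd p (hBg p hp) _ (hτi p hp) (hτe p hp ▸ dvd_mul_right _ _)
  have hS : ∀ d, ∀ e ∈ Finset.Icc 1 m.natDegree, Scount k m d e =
      (A.filter fun p => p.natDegree = d ∧ multiplicity (expand k 2 p) m = e).card := by
    intro d e he
    have he0 : e ≠ 0 := (Nat.one_le_iff_ne_zero).1 (Finset.mem_Icc.1 he).1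
    rw [Scount, ← Nat.card_eq_finsetCard]
    symm
    refine Nat.card_congr (Equiv.ofBijective (fun p => ⟨expand k 2 p, ?_⟩) ⟨?_, ?_⟩)
    · obtain ⟨hpA, hpd, hpe⟩ := Finset.mem_filter.1 p.2
      obtain ⟨hpg, hpi⟩ := hA _ hpA
      refine ⟨(monic_expand_iff two_pos).2 (hirr _ hpg).1, hpi, ?_, expand_two_comp_neg_X _,
        (hmult _ e hpi).1 hpe⟩
      rw [natDegree_expand, hpd, mul_comm]
    · intro p r hpr
      exact Subtype.ext ((expand_inj (Nat.zero_lt_succ 1)).1 (Subtype.ext_iff.1 hpr))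
    · rintro ⟨π, hπm, hπi, hπd, hπe, hπ1⟩
      obtain ⟨p, rfl⟩ := exists_expand_of_even h2 hπe
      have hpm : p.Monic := (monic_expand_iff two_pos).1 hπm
      have hpi : Irreducible p := of_irreducible_expand two_ne_zero hπi
      have hpg : p ∈ irrDivisors g := by
        refine (mem_irrDivisors hg.ne_zero).2 ⟨hpm, hpi, ?_⟩
        have h1 := (hfac _ hπi).1 ((dvd_pow_self _ he0).trans hπ1.1)
        exact (expand_dvd_expand_iff h2 hpm.ne_zero).1 h1
      refine ⟨⟨p, Finset.mem_filter.2 ⟨Finset.mem_filter.2 ⟨hpg, hπi⟩, ?_, (hmult _ e hπi).2 hπ1⟩⟩,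
        rfl⟩
      rw [natDegree_expand] at hπd
      omega
  have hT : ∀ d, ∀ e ∈ Finset.Icc 1 m.natDegree, Tcount k m d e =
      (B.filter fun p => p.natDegree = d ∧ multiplicity (τ p) m = e).card := by
    intro d e he
    have he0 : e ≠ 0 := (Nat.one_le_iff_ne_zero).1 (Finset.mem_Icc.1 he).1
    rw [Tcount, ← Nat.card_eq_finsetCard]
    symm
    refine Nat.card_congr (Equiv.ofBijective (fun p => ⟨{τ p, tilde (τ p)}, ?_⟩) ⟨?_, ?_⟩)
    · obtain ⟨hpB, hpd, hpe⟩ := Finset.mem_filter.1 p.2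
      obtain ⟨h1, h3⟩ := (hmult _ e (hτi _ hpB)).1 hpe
      have hd := (hτd _ hpB).trans hpd
      have ht' : tilde (τ p) = (-1) ^ d * (τ p).comp (-X) := by rw [tilde, hd]
      exact ⟨τ p, hτm _ hpB, hτi _ hpB, hd, ht' ▸ hτne _ hpB, h1, h3, by rw [ht']⟩
    · intro p r hpr
      have hpB := (Finset.mem_filter.1 p.2).1
      have hrB := (Finset.mem_filter.1 r.2).1
      have h1 : τ p ∈ ({τ r, tilde (τ r)} : Set k[X]) := by
        have hset : ({τ p, tilde (τ p)} : Set k[X]) = {τ r, tilde (τ r)} := Subtype.ext_iff.1 hpr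
        rw [← hset]
        exact Set.mem_insert _ _
      have h3 : τ p ∣ expand k 2 r := by
        rw [← hτe _ hrB]
        rcases h1 with h | h
        · rw [h]; exact dvd_mul_right _ _
        · rw [Set.mem_singleton_iff.1 h]; exact dvd_mul_left _ _
      have hp' := hirr _ (hBg _ hpB)
      have hr' := hirr _ (hBg _ hrB)
      exact Subtype.ext (eq_of_dvd_expand hp'.1 hp'.2 hr'.1 hr'.2 (hτi _ hpB)
        (hτe _ hpB ▸ dvd_mul_right _ _) h3)
    · rintro ⟨P, σ, hσm, hσi, hσd, hσne, hσ1, hσ3, rfl⟩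
      have ht' : (-1) ^ d * σ.comp (-X) = tilde σ := by rw [tilde, hσd]
      simp only [ht'] at hσne ⊢
      obtain ⟨p, hpg, hσp⟩ := exists_dvd_expand hg.ne_zero hσi
        ((hfac _ hσi).1 ((dvd_pow_self _ he0).trans hσ1))
      obtain ⟨hpm, hpi⟩ := hirr p hpg
      -- a divisor of `t²` is `t`, which equals its own `tilde`
      have hpX : p ≠ X := by
        rintro rfl
        rw [expand_X] at hσp
        have h1 := eq_of_irreducible_dvd hσm hσi monic_X irreducible_X
          ((Irreducible.prime hσi).dvd_of_dvd_pow hσp)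
        refine hσne ?_
        rw [h1, tilde, natDegree_X, X_comp, pow_one, neg_one_mul, neg_neg]
      have hni : ¬ Irreducible (expand k 2 p) := by
        intro h
        have h1 := eq_of_irreducible_dvd hσm hσi ((monic_expand_iff two_pos).2 hpm) h hσp
        exact hσne (by rw [h1, tilde_eq_self_of_expand])
      have hpB : p ∈ B :=
        Finset.mem_filter.2 ⟨Finset.mem_filter.2 ⟨hpg, hni⟩, hpX⟩
      have hσmu := (hmult _ e hσi).2 ⟨hσ1, hσ3⟩
      have hor : σ = τ p ∨ σ = tilde (τ p) := by
        rw [← hτe p hpB] at hσp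
        exact ((Irreducible.prime hσi).dvd_or_dvd hσp).imp
          (fun h => eq_of_irreducible_dvd hσm hσi (hτm p hpB) (hτi p hpB) h)
          (fun h => eq_of_irreducible_dvd hσm hσi (monic_tilde (hτm p hpB))
            (irreducible_tilde (hτi p hpB)) h)
      refine ⟨⟨p, Finset.mem_filter.2 ⟨hpB, ?_, ?_⟩⟩, Subtype.ext ?_⟩
      · rw [← hτd p hpB, ← hσd]
        rcases hor with h | h
        · rw [h]
        · rw [h, natDegree_tilde]
      · rw [← hσmu]
        rcases hor with h | h
        · rw [h]
        · rw [h, multiplicity_tilde hm0 (hτi p hpB) ht]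
      · change ({τ p, tilde (τ p)} : Set k[X]) = {σ, tilde σ}
        rcases hor with h | h
        · rw [h]
        · rw [h, tilde_tilde, Set.pair_comm]
  rw [hsplit, prod_eq_prod_prod_pow A m.natDegree natDegree
      (fun p => multiplicity (expand k 2 p) m) _ _ (fun d => 1 + (q ^ d)⁻¹),
    prod_eq_prod_prod_pow B m.natDegree natDegree
      (fun p => multiplicity (τ p) m) _ _ (fun d => 1 - (q ^ d)⁻¹), ← Finset.prod_mul_distrib]
  · refine Finset.prod_congr rfl fun d hd => ?_
    rw [← Finset.prod_mul_distrib]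
    refine Finset.prod_congr rfl fun e he => ?_
    rw [hS d e he, hT d e he]
  · intro p hp
    rw [← hτd p hp]
    exact (multiplicity_mem hm0 (hτi p hp) (hτdvd p hp)).2
  · intro p hp
    exact (multiplicity_mem hm0 (hτi p hp) (hτdvd p hp)).1
  · intro p hp
    have h1 := (multiplicity_mem hm0 (hA p hp).2 (hdvd p (hA p hp).1 _ (hA p hp).2 dvd_rfl)).2
    rw [natDegree_expand, Finset.mem_Icc] at h1
    rw [Finset.mem_Icc]
    omega
  · intro p hp
    exact (multiplicity_mem hm0 (hA p hp).2 (hdvd p (hA p hp).1 _ (hA p hp).2 dvd_rfl)).1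

end Count

/-! ### The order of the centralizer -/

/-- the order of the centralizer in `G₁` of a regular element `x ∈ g₁`
equals `2^ν q^n ∏_{d,e≥1} (1+q^{-d})^{S_{d,e}(m_x)} (1-q^{-d})^{T_{d,e}(m_x)}`, where
`ν = 1` if `N` is even and `x` is singular, and `ν = 0` otherwise. -/
theorem centralizer_card_regular
    {k : Type*} [Field k] [Fintype k] (hchar : ringChar k ≠ 2)
    {N : ℕ} (hN : 2 ≤ N)
    (J : Matrix (Fin N) (Fin N) k) (hJunit : IsUnit J)
    (hJeven : Even N → Jᵀ = -J) (hJodd : ¬ Even N → Jᵀ = J)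
    (x : Matrix (Fin N) (Fin N) k) (hx : xᵀ * J + J * x = 0)
    (hreg : Module.finrank (AlgebraicClosure k)
        (antiCent (AlgebraicClosure k) N
          (J.map (algebraMap k (AlgebraicClosure k)))
          (x.map (algebraMap k (AlgebraicClosure k)))) = N / 2) :
    (Nat.card {g : Matrix (Fin N) (Fin N) k //
        gᵀ * J * g = J ∧ g.det = 1 ∧ g * x = x * g} : ℚ) =
      2 ^ (if Even N ∧ x.det = 0 then 1 else 0) * (Fintype.card k : ℚ) ^ (N / 2) *
        ∏ d ∈ Finset.Icc 1 N, ∏ e ∈ Finset.Icc 1 N,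
          (1 + ((Fintype.card k : ℚ) ^ d)⁻¹) ^ Scount k (minpoly k x) d e *
            (1 - ((Fintype.card k : ℚ) ^ d)⁻¹) ^ Tcount k (minpoly k x) d e := by
  have h2 : (2 : k) ≠ 0 := Ring.two_ne_zero hchar
  have hJdet : IsUnit J.det := (Matrix.isUnit_iff_isUnit_det J).1 hJunit
  have hJJ : J * J⁻¹ = 1 := Matrix.mul_nonsing_inv J hJdet
  have hJJ' : J⁻¹ * J = 1 := Matrix.nonsing_inv_mul J hJdet
  have hdeg : (minpoly k x).natDegree = N :=
    natDegree_minpoly_eq h2 hN J J⁻¹ hJJ hJJ' hJeven hJodd x hx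
      ((finrank_antiCent_le N J x).trans hreg.le)
  have hm : (minpoly k x).Monic := minpoly.monic (Matrix.isIntegral x)
  have hσ := minpoly_comp_neg_X hJJ hx
  obtain ⟨m, hmx⟩ : ∃ m, m = minpoly k x := ⟨_, rfl⟩
  rw [← hmx] at hdeg hm hσ ⊢
  obtain ⟨g, hg, hgdeg, hgm, hgdvd⟩ := exists_half h2 hm hσ
  obtain ⟨θ, hθ, hcard⟩ := exists_involution_card h2 hm
    (hσ ▸ dvd_mul_left m _) hgdvd
  have hG := card_centralizer h2 hJJ hJJ' hx hmx hdeg θ hθ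
  have ht : tilde m = m := by
    rw [tilde, hσ, ← mul_assoc, neg_one_pow_mul_self, one_mul]
  -- for odd degree `g(t²) = t * m`, but `t ∣ m` already
  have hfac : ∀ π : k[X], Irreducible π → (π ∣ m ↔ π ∣ expand k 2 g) := by
    intro π hπ
    rcases hgm with ⟨-, h⟩ | ⟨hodd, h⟩
    · rw [h]
    · rw [h]
      refine ⟨fun h1 => h1.mul_left _, fun h1 => ?_⟩
      have hX : X ∣ m := X_dvd_of_odd h2 (by rw [hσ, hodd.neg_one_pow, neg_one_mul])
      exact ((Irreducible.prime hπ).dvd_or_dvd h1).elim (fun h3 => h3.trans hX) id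
  have hdivs : irrDivisors m = irrDivisors (expand k 2 g) := by
    ext π
    rw [mem_irrDivisors hm.ne_zero, mem_irrDivisors ((expand_ne_zero two_pos).2 hg.ne_zero)]
    exact and_congr_right fun _ => and_congr_right fun h => hfac π h
  have hprod := prod_localFactor h2 (Fintype.card k : ℚ) hm hg ht hfac
  have hsplit := prod_irrDivisors_expand h2 (Fintype.card k : ℚ) hg.ne_zero
  rw [hprod, hdeg] at hsplit
  have hcm := card_units_adjoinRoot m hm.ne_zero
  have hcg := card_units_adjoinRoot g hg.ne_zero
  rw [hdivs, hsplit] at hcm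
  have hcg0 : (Nat.card (AdjoinRoot g)ˣ : ℚ) ≠ 0 := by
    have := (card_adjoinRoot g hg.ne_zero).1
    exact Nat.cast_ne_zero.2 Nat.card_pos.ne'
  refine mul_right_cancel₀ hcg0 ?_
  -- `|U| * |(k[s]/(g))ˣ| = |(k[t]/(m))ˣ|`, and the powers of `q` combine to `q ^ (deg m - deg g)`
  rw [hG, Nat.cast_mul, mul_assoc, ← Nat.cast_mul, hcard, hcm, hcg]
  nth_rewrite 1 [← hgdeg]
  rw [hdeg, pow_add]
  push_cast
  ring
end

section
/- Let f ∈ k[t] be monic irreducible with f(−t) = f(t) or f(−t) = −f(t), and let r ≥ 1. Let E_{f,r} be the image of the map R_{f,r}^× → R_{f,r}^×, z ↦ σ(z)·z. If f ≠ t, then |E_{f,r}| = q^{r·deg(f)/2} · (1 − q^{−deg(f)/2}); if f = t, then |E_{f,r}| = ((q−1)/2) · q^{⌈r/2⌉ − 1}. -/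
/-!
Let `N z = σ(z) z`. Norms of units are classes of even polynomials `h(t²)`, so the image of `N`
lies in the subring `k[s]/(g^e)`, `s = t²`, of `k[t]/(f^r)`; here `f = g(t²)` and `e = r` if
`f ≠ t`, while `g = s` and `e = ⌈r/2⌉` if `f = t`.

An even class `w` is a norm as soon as it is one modulo `f` (`NormImage.norm_iff`): if `w ≡ N z`,
then `x = w / N z` is `σ`-invariant and lies in the group `1 + (f)` of odd order, so `x = v²` with
`v` a power of `x`; thus `σ v = v` and `w = N (v z)`.

Modulo `f`, every unit of `k[s]/(g)` is a norm when `f ≠ t`, because in a finite field of odd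
cardinality each element has the form `a² - s b²` for fixed `s ≠ 0` (`NormImage.norm_mod_iff`).
When `f = t` the involution is trivial on the residue field `k` and the norms are the nonzero
squares. The image of `N` is thus the preimage of a subset of known size under the reduction
`k[s]/(g^e) → k[s]/(g)`, whose fibres all have the same size (`NormImage.card_norms`).
-/

open Polynomial

namespace NormImage

variable {k : Type*} [Field k]

/-! ### Fibres, even polynomials and quotients of `k[t]` -/

/-- If `φ` is a surjective homomorphism, then the preimage of `A` is a disjoint union of `|A|`
translates of the kernel. -/
theorem card_preimage_mul {S K : Type*} [AddGroup S] [AddGroup K] (φ : S →+ K)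
    (hφ : Function.Surjective φ) (A : Set K) :
    Nat.card {s // φ s ∈ A} * Nat.card K = Nat.card A * Nat.card S := by
  have key : ∀ B : Set K, Nat.card {s // φ s ∈ B} = Nat.card B * Nat.card φ.ker := by
    intro B
    rw [← Nat.card_prod]
    obtain ⟨c, hc⟩ := hφ.hasRightInverse
    refine Nat.card_congr
      { toFun := fun s => (⟨φ s, s.2⟩, ⟨s - c (φ s), by simp [AddMonoidHom.mem_ker, hc _]⟩)
        invFun := fun x => ⟨x.2 + c x.1, by
          have := AddMonoidHom.mem_ker.1 x.2.2
          simp [this, hc _]⟩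
        left_inv := fun s => by simp
        right_inv := ?_ }
    rintro ⟨⟨b, hb⟩, ⟨y, hy⟩⟩
    have := AddMonoidHom.mem_ker.1 hy
    simp [this, hc _]
  have h1 := key Set.univ
  have h2 : Nat.card {s // φ s ∈ (Set.univ : Set K)} = Nat.card S :=
    Nat.card_congr (Equiv.subtypeUnivEquiv fun _ => Set.mem_univ _)
  rw [key A, ← h2, h1, Nat.card_congr (Equiv.Set.univ K)]
  ring

theorem expand_comp_neg (h : k[X]) : (expand k 2 h).comp (-X) = expand k 2 h := by
  rw [expand_eq_comp_X_pow, comp_assoc]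
  simp

theorem exists_expand_of_comp_neg (h2 : (2 : k) ≠ 0) {p : k[X]} (hp : p.comp (-X) = p) :
    ∃ h, p = expand k 2 h := by
  refine ⟨contract 2 p, ?_⟩
  ext n
  rw [coeff_expand two_pos, coeff_contract two_ne_zero]
  split_ifs with hn
  · rw [Nat.div_mul_cancel hn]
  · have hodd : Odd n := by rwa [← Nat.not_even_iff_odd, even_iff_two_dvd]
    have e := congrArg (coeff · n) hp
    have e1 : (-X : k[X]) = C (-1) * X := by simp
    simp only [e1, comp_C_mul_X_coeff, hodd.neg_one_pow] at e
    have : 2 * p.coeff n = 0 := by linear_combination -e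
    simpa [h2] using this

theorem expand_dvd_expand {g h : k[X]} : expand k 2 g ∣ expand k 2 h ↔ g ∣ h := by
  refine ⟨fun ⟨Q, hQ⟩ => ⟨contract 2 Q, ?_⟩, map_dvd _⟩
  rw [← contract_expand (p := 2) (f := h) two_ne_zero, hQ, mul_comm,
    contract_mul_expand two_ne_zero, mul_comm]

theorem X_pow_dvd_expand {h : k[X]} (r : ℕ) :
    X ^ r ∣ expand k 2 h ↔ X ^ ((r + 1) / 2) ∣ h := by
  simp only [X_pow_dvd_iff, coeff_expand two_pos]
  constructor
  · intro H d hd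
    have := H (2 * d) (by omega)
    simpa using this
  · intro H d hd
    split_ifs with h2
    · exact H _ (by omega)
    · rfl

theorem natCard_quotient {g : k[X]} (hg : g.Monic) :
    Nat.card (k[X] ⧸ Ideal.span {g}) = Nat.card k ^ g.natDegree := by
  have := hg.finite_quotient
  rw [Module.natCard_eq_pow_finrank (K := k), finrank_quotient_span_eq_natDegree]

/-! ### Lifting norms from `k[t]/(f)` to `k[t]/(f^r)` -/

/-- An element of the form `1 + nilpotent` has odd (`p`-power) order when the characteristic is an
odd prime `p`, so it is the square of one of its own powers. -/
theorem exists_pow_sq_eq {R : Type*} [CommRing R] (p : ℕ) [Fact p.Prime] [CharP R p]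
    (hp : p ≠ 2) {x : R} (hx : IsNilpotent (x - 1)) : ∃ m, (x ^ m) ^ 2 = x := by
  obtain ⟨n, hn⟩ := hx
  have hpr : p.Prime := Fact.out
  have h1 : x ^ p ^ n = 1 := by
    have h0 : (x - 1) ^ p ^ n = 0 := pow_eq_zero_of_le (n.lt_pow_self hpr.one_lt).le hn
    calc x ^ p ^ n = (x - 1 + 1) ^ p ^ n := by rw [sub_add_cancel]
      _ = 1 := by rw [add_pow_char_pow, h0, one_pow, zero_add]
  obtain ⟨m, hm⟩ := (hpr.odd_of_ne_two hp).pow (n := n)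
  refine ⟨m + 1, ?_⟩
  rw [← pow_mul, show (m + 1) * 2 = p ^ n + 1 by omega, pow_succ, h1, one_mul]

/-- An element of `k[t]/(f^r)` is the norm of a unit iff it is the class of an even polynomial
`h(t²)` that is a norm of a unit modulo `f`: the passage from `f` to `f^r` costs nothing, because
the obstruction lies in the group `1 + (f)` of odd order. -/
theorem norm_iff (hchar : ringChar k ≠ 2) [Finite k] {f : k[X]} (hirr : Irreducible f)
    {r : ℕ} (hr : 1 ≤ r)
    (I : Ideal k[X]) (hI : I = Ideal.span {f ^ r})
    (σ : (k[X] ⧸ I) →+* (k[X] ⧸ I))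
    (hσ : ∀ p : k[X], σ (Ideal.Quotient.mk I p) =
        Ideal.Quotient.mk I (p.comp (-X)))
    (w : k[X] ⧸ I) :
    (∃ z, IsUnit z ∧ w = σ z * z) ↔
      ∃ h, Ideal.Quotient.mk I (expand k 2 h) = w ∧
        ∃ z, ¬ f ∣ z ∧ f ∣ expand k 2 h - z.comp (-X) * z := by
  have h2 : (2 : k) ≠ 0 := Ring.two_ne_zero hchar
  have hr0 : r ≠ 0 := by omega
  have hmk0 : ∀ p, Ideal.Quotient.mk I p = 0 ↔ f ^ r ∣ p := fun p => by
    rw [Ideal.Quotient.eq_zero_iff_mem, hI, Ideal.mem_span_singleton]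
  have hunit : ∀ p, IsUnit (Ideal.Quotient.mk I p) ↔ ¬ f ∣ p := by
    intro p
    constructor
    · rintro hu hd
      obtain ⟨y, hy⟩ := hu.exists_right_inv
      obtain ⟨q, rfl⟩ := Ideal.Quotient.mk_surjective y
      rw [← map_mul, ← sub_eq_zero, ← map_one (Ideal.Quotient.mk I), ← map_sub, hmk0] at hy
      have h3 : f ∣ p * q - 1 := (dvd_pow_self f hr0).trans hy
      have h4 : f ∣ 1 := by simpa using (hd.mul_right q).sub h3
      exact hirr.not_isUnit (isUnit_of_dvd_one h4)
    · intro hd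
      obtain ⟨a, b, hab⟩ := ((hirr.coprime_iff_not_dvd.2 hd).pow_left (m := r))
      refine IsUnit.of_mul_eq_one (Ideal.Quotient.mk I b) ?_
      have : Ideal.Quotient.mk I (f ^ r) = 0 := (hmk0 _).2 dvd_rfl
      have e := congrArg (Ideal.Quotient.mk I) hab
      rw [map_add, map_mul, map_mul, this, mul_zero, zero_add, map_one] at e
      rwa [mul_comm] at e
  have hσσ : ∀ x, σ (σ x) = x := by
    intro x
    obtain ⟨q, rfl⟩ := Ideal.Quotient.mk_surjective x
    rw [hσ, hσ, comp_neg_X_comp_neg_X]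
  constructor
  · rintro ⟨z, hz, rfl⟩
    obtain ⟨q, rfl⟩ := Ideal.Quotient.mk_surjective z
    obtain ⟨h, hh⟩ := exists_expand_of_comp_neg h2 (p := q.comp (-X) * q) (by
      rw [mul_comp, comp_neg_X_comp_neg_X, mul_comm])
    refine ⟨h, ?_, q, (hunit q).1 hz, ?_⟩
    · rw [hσ, ← map_mul, hh]
    · rw [hh, sub_self]; exact dvd_zero _
  · rintro ⟨h, rfl, z, hz, hd⟩
    set w := Ideal.Quotient.mk I (expand k 2 h) with hw
    set ζ := Ideal.Quotient.mk I z with hζ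
    have hζu : IsUnit ζ := (hunit z).2 hz
    have hNu : IsUnit (σ ζ * ζ) := (hζu.map σ).mul hζu
    obtain ⟨y, hy⟩ := hNu.exists_right_inv
    have hσw : σ w = w := by rw [hw, hσ, expand_comp_neg]
    have hσN : σ (σ ζ * ζ) = σ ζ * ζ := by rw [map_mul, hσσ, mul_comm]
    have hσy : σ y = y := by
      have e := congrArg σ hy
      rw [map_mul, hσN, map_one] at e
      exact hNu.mul_left_cancel (e.trans hy.symm)
    have hnil : IsNilpotent (w * y - 1) := by
      have e : w * y - 1 = Ideal.Quotient.mk I (expand k 2 h - z.comp (-X) * z) * y := by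
        rw [map_sub, map_mul, ← hσ, sub_mul, hy]
      refine ⟨r, ?_⟩
      rw [e, mul_pow, ← map_pow, (hmk0 _).2 (pow_dvd_pow_of_dvd hd r), zero_mul]
    have : Nontrivial (k[X] ⧸ I) := by
      refine ⟨1, 0, fun e => ?_⟩
      have := (hunit 0).1 (by rw [map_zero, ← e]; exact isUnit_one)
      exact this (dvd_zero f)
    have hP : CharP (k[X] ⧸ I) (ringChar k) :=
      charP_of_injective_algebraMap (algebraMap k (k[X] ⧸ I)).injective (ringChar k)
    have : Fact (ringChar k).Prime := ⟨CharP.char_is_prime k _⟩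
    obtain ⟨m, hm⟩ := exists_pow_sq_eq (ringChar k) hchar hnil
    have hvu : IsUnit ((w * y) ^ m) := by
      have : IsUnit (w * y) := by simpa using hnil.isUnit_add_one
      exact this.pow m
    refine ⟨(w * y) ^ m * ζ, hvu.mul hζu, ?_⟩
    rw [map_mul, map_pow, map_mul, hσw, hσy]
    linear_combination (-w) * hy - (σ ζ * ζ) * hm

/-! ### Counting norms -/

/-- Counting norms through the even subring `k[s]/(g^e)`, `s = t²`, of `k[t]/(f^r)`, when the
norm condition modulo `f` is read off as membership in `A` under a surjection `ψ`. -/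
theorem card_norms (hchar : ringChar k ≠ 2) [Finite k] {f g : k[X]} (hirr : Irreducible f)
    {r e : ℕ} (hr : 1 ≤ r) (hg : g.Monic)
    (σ : (k[X] ⧸ Ideal.span {f ^ r}) →+* (k[X] ⧸ Ideal.span {f ^ r}))
    (hσ : ∀ p : k[X], σ (Ideal.Quotient.mk (Ideal.span {f ^ r}) p) =
        Ideal.Quotient.mk (Ideal.span {f ^ r}) (p.comp (-X)))
    (hdvd : ∀ h : k[X], f ^ r ∣ expand k 2 h ↔ g ^ e ∣ h)
    {K : Type*} [CommRing K] (ψ : k[X] →+* K) (hψ : Function.Surjective ψ)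
    (hψg : ψ (g ^ e) = 0) (A : Set K)
    (hA : ∀ h, (∃ z, ¬ f ∣ z ∧ f ∣ expand k 2 h - z.comp (-X) * z) ↔ ψ h ∈ A) :
    Nat.card {w : k[X] ⧸ Ideal.span {f ^ r} //
      ∃ z : k[X] ⧸ Ideal.span {f ^ r}, IsUnit z ∧ w = σ z * z} * Nat.card K =
    Nat.card A * Nat.card k ^ (e * g.natDegree) := by
  rw [← hg.natDegree_pow, ← natCard_quotient (hg.pow e)]
  have hz : ∀ a ∈ Ideal.span {g ^ e}, ψ a = 0 := by
    intro a ha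
    obtain ⟨b, rfl⟩ := Ideal.mem_span_singleton.1 ha
    rw [map_mul, hψg, zero_mul]
  let φ := Ideal.Quotient.lift (Ideal.span {g ^ e}) ψ hz
  let ρ : k[X] →+* k[X] ⧸ Ideal.span {f ^ r} :=
    (Ideal.Quotient.mk _).comp (expand k 2 : k[X] →ₐ[k] k[X]).toRingHom
  have hρ : ∀ a, ρ a = Ideal.Quotient.mk _ (expand k 2 a) := fun a => rfl
  have hker : ∀ a, ρ a = 0 ↔ a ∈ Ideal.span {g ^ e} := fun a => by
    rw [hρ, Ideal.Quotient.eq_zero_iff_mem, Ideal.mem_span_singleton, hdvd,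
      Ideal.mem_span_singleton]
  let ι := Ideal.Quotient.lift (Ideal.span {g ^ e}) ρ fun a ha => (hker a).2 ha
  have hι : Function.Injective ι := by
    rw [injective_iff_map_eq_zero]
    intro a ha
    obtain ⟨q, rfl⟩ := Ideal.Quotient.mk_surjective a
    exact Ideal.Quotient.eq_zero_iff_mem.2 ((hker q).1 (by simpa [ι] using ha))
  have hφ : Function.Surjective φ := Ideal.Quotient.lift_surjective_of_surjective _ hz hψ
  have hcount := card_preimage_mul φ.toAddMonoidHom hφ A
  rw [← hcount]
  congr 1
  refine Eq.trans ?_ (Nat.card_image_of_injective hι {s | φ.toAddMonoidHom s ∈ A})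
  refine Nat.card_congr (Equiv.subtypeEquivRight fun w => ?_)
  rw [norm_iff hchar hirr hr _ rfl σ hσ w]
  constructor
  · rintro ⟨h, rfl, hh⟩
    exact ⟨Ideal.Quotient.mk _ h, (hA h).1 hh, rfl⟩
  · rintro ⟨s, hs, rfl⟩
    obtain ⟨h, rfl⟩ := Ideal.Quotient.mk_surjective s
    exact ⟨h, rfl, (hA h).2 hs⟩

/-! ### Norms modulo `f` -/

/-- When `f = g(t²)` is irreducible, every unit of `k[s]/(g)` is a norm from `k[t]/(f)`: it has the
form `a² - s b²`, which is the norm of `a(t²) + t b(t²)`. -/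
theorem norm_mod_iff (hchar : ringChar k ≠ 2) [Finite k] {g : k[X]} (hg : g.Monic)
    (hirr : Irreducible (expand k 2 g)) (h : k[X]) :
    (∃ z, ¬ expand k 2 g ∣ z ∧ expand k 2 g ∣ expand k 2 h - z.comp (-X) * z) ↔ ¬ g ∣ h := by
  have hgi : Irreducible g := of_irreducible_expand two_ne_zero hirr
  constructor
  · rintro ⟨z, hz, hd⟩ hgh
    have h1 : expand k 2 g ∣ z.comp (-X) * z := by
      simpa using (expand_dvd_expand.2 hgh).sub hd
    rcases hirr.prime.dvd_or_dvd h1 with h3 | h3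
    · rw [dvd_comp_neg_X_iff, expand_comp_neg] at h3
      exact hz h3
    · exact hz h3
  · intro hgh
    have hXg : ¬ g ∣ X := by
      intro hX
      have h1 : g = X := eq_of_monic_of_associated hg monic_X
        (hgi.associated_of_dvd irreducible_X hX)
      rw [h1, expand_X] at hirr
      exact not_irreducible_pow (by norm_num) hirr
    have := hg.finite_quotient
    have : Finite (k[X] ⧸ Ideal.span {g}) := Module.finite_of_finite k
    have := Fintype.ofFinite (k[X] ⧸ Ideal.span {g})
    have := PrincipalIdealRing.isMaximal_of_irreducible hgi
    let _ := Ideal.Quotient.field (Ideal.span {g})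
    have hmk0 : ∀ p, Ideal.Quotient.mk (Ideal.span {g}) p = 0 ↔ g ∣ p := fun p => by
      rw [Ideal.Quotient.eq_zero_iff_mem, Ideal.mem_span_singleton]
    have hodd : Fintype.card (k[X] ⧸ Ideal.span {g}) % 2 = 1 := by
      have hk : Odd (Nat.card k) := by
        have := Fintype.ofFinite k
        rw [Nat.card_eq_fintype_card, Nat.odd_iff]
        exact FiniteField.odd_card_of_char_ne_two hchar
      rw [← Nat.card_eq_fintype_card, natCard_quotient hg]
      exact Nat.odd_iff.1 hk.pow
    set s := Ideal.Quotient.mk (Ideal.span {g}) X with hs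
    have hs0 : s ≠ 0 := fun e => hXg ((hmk0 X).1 e)
    obtain ⟨a, b, hab⟩ := FiniteField.exists_root_sum_quadratic
      (f := X ^ 2 - C (Ideal.Quotient.mk (Ideal.span {g}) h)) (g := C (-s) * X ^ 2)
      (by exact degree_X_pow_sub_C two_pos _) (by
        exact degree_C_mul_X_pow 2 (neg_ne_zero.2 hs0)) hodd
    obtain ⟨a, rfl⟩ := Ideal.Quotient.mk_surjective a
    obtain ⟨b, rfl⟩ := Ideal.Quotient.mk_surjective b
    have hd : g ∣ h - (a ^ 2 - X * b ^ 2) := by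
      rw [← hmk0]
      simp only [eval_sub, eval_pow, eval_X, eval_C, eval_mul] at hab
      simp only [map_sub, map_mul, map_pow, ← hs]
      linear_combination -hab
    have hz : (expand k 2 a + X * expand k 2 b).comp (-X) * (expand k 2 a + X * expand k 2 b)
        = expand k 2 (a ^ 2 - X * b ^ 2) := by
      simp only [add_comp, mul_comp, expand_comp_neg, X_comp, map_sub, map_mul, map_pow,
        expand_X]
      ring
    refine ⟨expand k 2 a + X * expand k 2 b, fun hdz => hgh ?_, ?_⟩
    · have h1 : g ∣ a ^ 2 - X * b ^ 2 := by
        rw [← expand_dvd_expand, ← hz]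
        exact hdz.mul_left _
      simpa using hd.add h1
    · rw [hz, ← map_sub]
      exact expand_dvd_expand.2 hd

theorem card_nonzero_squares (hchar : ringChar k ≠ 2) [Finite k] :
    2 * Nat.card {a : k | ∃ z, z ≠ 0 ∧ a = z ^ 2} = Nat.card k - 1 := by
  have e : Nat.card {a : k | ∃ z, z ≠ 0 ∧ a = z ^ 2} =
      Nat.card (powMonoidHom 2 : kˣ →* kˣ).range := by
    symm
    refine Nat.card_congr (Equiv.ofBijective (fun u => ⟨(u : kˣ), ?_⟩) ⟨?_, ?_⟩)
    · obtain ⟨_, v, rfl⟩ := u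
      exact ⟨v, v.ne_zero, by simp⟩
    · intro u v huv
      ext
      simpa using huv
    · rintro ⟨_, z, hz, rfl⟩
      exact ⟨⟨_, Units.mk0 z hz, rfl⟩, by simp⟩
  have hev : 2 ∣ Nat.card k - 1 := by
    have := Fintype.ofFinite k
    have := FiniteField.odd_card_of_char_ne_two hchar
    rw [Nat.card_eq_fintype_card]
    omega
  rw [e, IsCyclic.card_powMonoidHom_range, Nat.card_units, Nat.gcd_eq_right hev,
    Nat.mul_div_cancel' hev]

end NormImage

/-- let `k` be a finite field of odd characteristic with `q` elements,
`f ∈ k[t]` monic irreducible with `f(-t) = ±f(t)`, `r ≥ 1`, `R = k[t]/(f^r)` and `σ`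
the involution of `R` induced by `t ↦ -t`.  Let `E` be the image of `z ↦ σ(z)·z` on
`R^×`.  If `f ≠ t` then `|E| = q^{r·deg f/2}(1 - q^{-deg f/2})`, and if `f = t` then
`|E| = ((q-1)/2)·q^{⌈r/2⌉-1}`. -/
theorem card_image_norm_map
    {k : Type*} [Field k] [Fintype k] (hchar : ringChar k ≠ 2)
    (f : Polynomial k) (hmonic : f.Monic) (hirr : Irreducible f)
    (hsym : f.comp (-X) = f ∨ f.comp (-X) = -f)
    (r : ℕ) (hr : 1 ≤ r)
    (σ : (Polynomial k ⧸ Ideal.span {f ^ r}) →+* (Polynomial k ⧸ Ideal.span {f ^ r}))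
    (hσ : ∀ p : Polynomial k,
      σ (Ideal.Quotient.mk (Ideal.span {f ^ r}) p) =
        Ideal.Quotient.mk (Ideal.span {f ^ r}) (p.comp (-X))) :
    (f ≠ X →
      (Nat.card {w : Polynomial k ⧸ Ideal.span {f ^ r} //
          ∃ z : Polynomial k ⧸ Ideal.span {f ^ r}, IsUnit z ∧ w = σ z * z} : ℝ) =
        (Fintype.card k : ℝ) ^ (((r * f.natDegree : ℕ) : ℝ) / 2) *
          (1 - (Fintype.card k : ℝ) ^ (-(f.natDegree : ℝ) / 2))) ∧
    (f = X →
      (Nat.card {w : Polynomial k ⧸ Ideal.span {f ^ r} //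
          ∃ z : Polynomial k ⧸ Ideal.span {f ^ r}, IsUnit z ∧ w = σ z * z} : ℝ) =
        ((Fintype.card k : ℝ) - 1) / 2 * (Fintype.card k : ℝ) ^ ((r + 1) / 2 - 1 : ℕ)) := by
  have h2 : (2 : k) ≠ 0 := Ring.two_ne_zero hchar
  have hq : (0 : ℝ) < Fintype.card k := by exact_mod_cast Fintype.card_pos
  refine ⟨fun hfX => ?_, ?_⟩
  · have heven : f.comp (-X) = f := by
      rcases hsym with h | h
      · exact h
      -- an odd irreducible polynomial vanishes at `0`, hence equals `X`
      · have h0 : f.eval 0 = 0 := by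
          have e := congrArg (eval 0) h
          simp only [eval_comp, eval_neg, eval_X, neg_zero] at e
          have : 2 * f.eval 0 = 0 := by linear_combination e
          simpa [h2] using this
        have hX : X ∣ f := by rwa [X_dvd_iff, coeff_zero_eq_eval_zero]
        exact absurd (eq_of_monic_of_associated hmonic monic_X
          (irreducible_X.associated_of_dvd hirr hX).symm) hfX
    obtain ⟨g, rfl⟩ := NormImage.exists_expand_of_comp_neg h2 heven
    have hg : g.Monic := (monic_expand_iff two_pos).1 hmonic
    have hgi : Irreducible g := of_irreducible_expand two_ne_zero hirr
    have hfin := hg.finite_quotient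
    have : Finite (k[X] ⧸ Ideal.span {g}) := Module.finite_of_finite k
    have hcard := NormImage.card_norms hchar hirr hr hg (e := r) σ hσ
      (fun h => by rw [← map_pow, NormImage.expand_dvd_expand])
      (Ideal.Quotient.mk (Ideal.span {g})) Ideal.Quotient.mk_surjective
      (by
        rw [Ideal.Quotient.eq_zero_iff_mem, Ideal.mem_span_singleton]
        exact dvd_pow_self g (by omega))
      {a | a ≠ 0} (fun h => by
        rw [NormImage.norm_mod_iff hchar hg hirr, Set.mem_ofPred_eq, Ne,
          Ideal.Quotient.eq_zero_iff_mem, Ideal.mem_span_singleton])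
    have hA : Nat.card {a : k[X] ⧸ Ideal.span {g} | a ≠ 0} =
        Fintype.card k ^ g.natDegree - 1 := by
      rw [← Nat.card_eq_fintype_card, ← NormImage.natCard_quotient hg]
      have := Set.ncard_compl ({0} : Set (k[X] ⧸ Ideal.span {g}))
      rwa [Set.ncard_singleton] at this
    rw [hA, NormImage.natCard_quotient hg, Nat.card_eq_fintype_card (α := k)] at hcard
    have hcardR := congrArg (Nat.cast : ℕ → ℝ) hcard
    rw [Nat.cast_mul, Nat.cast_mul, Nat.cast_sub (Nat.one_le_pow _ _ Fintype.card_pos)] at hcardR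
    push_cast at hcardR
    rw [natDegree_expand]
    have e1 : (((r * (g.natDegree * 2) : ℕ) : ℝ)) / 2 = ((r * g.natDegree : ℕ) : ℝ) := by
      push_cast; ring
    have e2 : -((g.natDegree * 2 : ℕ) : ℝ) / 2 = -((g.natDegree : ℕ) : ℝ) := by
      push_cast; ring
    rw [e1, e2, Real.rpow_neg hq.le, Real.rpow_natCast, Real.rpow_natCast]
    have hne : (Fintype.card k : ℝ) ^ g.natDegree ≠ 0 := pow_ne_zero _ hq.ne'
    refine mul_right_cancel₀ hne (hcardR.trans ?_)
    field_simp
  · rintro rfl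
    have hcard := NormImage.card_norms hchar hirr hr monic_X (e := (r + 1) / 2) σ hσ
      (fun h => NormImage.X_pow_dvd_expand r)
      (evalRingHom (0 : k)) (fun a => ⟨C a, by simp⟩)
      (by
        have : (r + 1) / 2 ≠ 0 := by omega
        simp [this])
      {a | ∃ z, z ≠ 0 ∧ a = z ^ 2} (fun h => by
        simp only [X_dvd_iff, coeff_zero_eq_eval_zero, eval_sub, eval_mul, eval_comp, eval_neg,
          eval_X, neg_zero, expand_eval, coe_evalRingHom, Set.mem_ofPred_eq, sub_eq_zero]
        constructor
        · rintro ⟨z, hz, hh⟩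
          exact ⟨z.eval 0, hz, by simpa [pow_two] using hh⟩
        · rintro ⟨z, hz, hh⟩
          exact ⟨C z, by simpa using hz, by simpa [pow_two] using hh⟩)
    have hsq := NormImage.card_nonzero_squares (k := k) hchar
    rw [Nat.card_eq_fintype_card (α := k)] at hcard hsq
    obtain ⟨m, hm⟩ : ∃ m, (r + 1) / 2 = m + 1 := ⟨(r + 1) / 2 - 1, by omega⟩
    rw [hm, natDegree_X, mul_one] at hcard
    rw [hm, Nat.add_sub_cancel]
    have hcardR := congrArg (Nat.cast : ℕ → ℝ) hcard
    have hsqR := congrArg (Nat.cast : ℕ → ℝ) hsq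
    rw [Nat.cast_sub Fintype.card_pos] at hsqR
    push_cast at hcardR hsqR
    refine mul_right_cancel₀ hq.ne' (hcardR.trans ?_)
    rw [← hsqR]
    ring
end
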